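/- arXiv:1203.2001 — 12 statements merged into one kernel-verified Lean document; each statement's English description precedes it below -/
import Mathlib

section
/- Let D ⊆ ℝⁿ (n ≥ 1) be a nonempty bounded convex open set. For all x, y ∈ D, the Funk distance satisfies d_F(x,y) = −log(1 − gauge (D − x) (y − x)). -/
/-!
Write `S = D - x`, `v = y - x` and `g = gauge S v`. For `x ≠ y`, boundedness of `D` gives `0 < g`
and openness gives `g < 1`. The point of the ray with parameter `t = g⁻¹` has gauge `1` after
translation by `-x`, hence it is the frontier point `y'` of the definition of the Funk distance.
There `‖x - y'‖ = g⁻¹ ‖v‖` and `‖y - y'‖ = (g⁻¹ - 1) ‖v‖`, whose quotient is `(1 - g)⁻¹`.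
-/

/-- `dF` is the Funk distance of the bounded convex open set `D`: `dF x x = 0`, and for
distinct `x, y ∈ D`, if `y'` is the point where the ray from `x` through `y` meets the
frontier of `D`, then `dF x y = log (‖x − y'‖ / ‖y − y'‖)`. -/
def IsFunkDist {n : ℕ} (D : Set (EuclideanSpace ℝ (Fin n)))
    (dF : EuclideanSpace ℝ (Fin n) → EuclideanSpace ℝ (Fin n) → ℝ) : Prop :=
  (∀ x ∈ D, dF x x = 0) ∧
  ∀ x ∈ D, ∀ y ∈ D, x ≠ y → ∀ y' ∈ frontier D, ∀ t : ℝ, 0 < t →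
    y' = x + t • (y - x) → dF x y = Real.log (‖x - y'‖ / ‖y - y'‖)

/-- For `x, y ∈ D`, the Funk distance satisfies
`d_F(x,y) = −log(1 − gauge (D − x) (y − x))`. -/
theorem funkDist_eq_gauge {n : ℕ} (hn : 1 ≤ n)
    (D : Set (EuclideanSpace ℝ (Fin n))) (hne : D.Nonempty)
    (hbdd : Bornology.IsBounded D) (hconv : Convex ℝ D) (hopen : IsOpen D)
    (dF : EuclideanSpace ℝ (Fin n) → EuclideanSpace ℝ (Fin n) → ℝ)
    (hdF : IsFunkDist D dF) :
    ∀ x ∈ D, ∀ y ∈ D, dF x y = -Real.log (1 - gauge ((· - x) '' D) (y - x)) := by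
  intro x hx y hy
  rcases eq_or_ne x y with rfl | hxy
  · simp [hdF.1 x hx]
  have himg : (· - x) '' D = Homeomorph.subRight x '' D := rfl
  set S := (· - x) '' D with hS
  have hSopen : IsOpen S := by
    rw [himg]
    exact (Homeomorph.subRight x).isOpenMap D hopen
  have hS0 : S ∈ nhds 0 := hSopen.mem_nhds ⟨x, hx, sub_self x⟩
  have hSconv : Convex ℝ S := by
    have h := hconv.translate (-x)
    have e : (fun z => -x + z) '' D = S := by
      rw [hS]
      congr 1
      funext z
      abel
    rwa [e] at h
  have hSbdd : Bornology.IsBounded S := by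
    obtain ⟨R, hR⟩ := hbdd.exists_norm_le
    refine isBounded_iff_forall_norm_le.2 ⟨R + ‖x‖, ?_⟩
    rintro _ ⟨z, hz, rfl⟩
    exact (norm_sub_le z x).trans (by gcongr; exact hR z hz)
  have hv : y - x ≠ 0 := sub_ne_zero.2 hxy.symm
  have hg0 : 0 < gauge S (y - x) :=
    (gauge_pos (absorbent_nhds_zero hS0) (NormedSpace.isVonNBounded_iff ℝ |>.2 hSbdd)).2 hv
  have hg1 : gauge S (y - x) < 1 := gauge_lt_one_of_mem_of_isOpen hSopen ⟨y, hy, rfl⟩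
  set g := gauge S (y - x) with hg
  have hfr : x + g⁻¹ • (y - x) ∈ frontier D := by
    have h1 : gauge S (g⁻¹ • (y - x)) = 1 := by
      rw [gauge_smul_of_nonneg (inv_nonneg.2 hg0.le), ← hg, smul_eq_mul, inv_mul_cancel₀ hg0.ne']
    have h2 := (gauge_eq_one_iff_mem_frontier hSconv hS0).1 h1
    rw [himg, ← Homeomorph.image_frontier] at h2
    obtain ⟨z, hz, hzeq⟩ := h2
    have hz' : z - x = g⁻¹ • (y - x) := hzeq
    rwa [← hz', add_sub_cancel]
  rw [hdF.2 x hx y hy hxy _ hfr g⁻¹ (inv_pos.2 hg0) rfl]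
  have hinv : 1 < g⁻¹ := (one_lt_inv₀ hg0).2 hg1
  have e1 : ‖x - (x + g⁻¹ • (y - x))‖ = g⁻¹ * ‖y - x‖ := by
    rw [sub_add_cancel_left, norm_neg, norm_smul, Real.norm_of_nonneg (inv_nonneg.2 hg0.le)]
  have e2 : ‖y - (x + g⁻¹ • (y - x))‖ = (g⁻¹ - 1) * ‖y - x‖ := by
    have : y - (x + g⁻¹ • (y - x)) = -((g⁻¹ - 1) • (y - x)) := by module
    rw [this, norm_neg, norm_smul, Real.norm_of_nonneg (by linarith)]
  rw [e1, e2, mul_div_mul_right _ _ (norm_ne_zero_iff.2 hv), ← Real.log_inv]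
  congr 1
  have h3 : g⁻¹ - 1 ≠ 0 := by linarith
  have h4 : 1 - g ≠ 0 := by linarith
  field_simp
end

section
/- Let D ⊆ ℝⁿ (n ≥ 1) be a nonempty bounded convex open set. The Funk distance satisfies the triangle inequality: d_F(x,z) ≤ d_F(x,y) + d_F(y,z) for all x, y, z ∈ D. -/
section

variable {n : ℕ} {D : Set (EuclideanSpace ℝ (Fin n))}
  {dF : EuclideanSpace ℝ (Fin n) → EuclideanSpace ℝ (Fin n) → ℝ}

/-- The ray from `x` through `y` meets the frontier, necessarily beyond `y`: it is connected, and
it leaves the bounded set `D`. -/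
lemma exists_exit (hbdd : Bornology.IsBounded D) (hconv : Convex ℝ D) (hopen : IsOpen D)
    {x y : EuclideanSpace ℝ (Fin n)} (hx : x ∈ D) (hy : y ∈ D) (hxy : x ≠ y) :
    ∃ t : ℝ, 1 < t ∧ x + t • (y - x) ∈ frontier D := by
  have hpos : 0 < ‖y - x‖ := norm_pos_iff.2 (sub_ne_zero.2 hxy.symm)
  obtain ⟨R, hR⟩ := hbdd.subset_closedBall x
  have hR0 : 0 ≤ R := by simpa using hR hx
  have hpre : IsPreconnected ((fun t : ℝ => x + t • (y - x)) '' Set.Ici 0) :=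
    isPreconnected_Ici.image _ (by fun_prop)
  have hout : x + ((R + 1) / ‖y - x‖) • (y - x) ∉ D := by
    intro h
    have h1 := hR h
    rw [mem_closedBall_iff_norm, add_sub_cancel_left, norm_smul, Real.norm_of_nonneg (by positivity),
      div_mul_cancel₀ _ hpos.ne'] at h1
    linarith
  obtain ⟨t, ht, htf⟩ : ∃ t : ℝ, 0 ≤ t ∧ x + t • (y - x) ∈ frontier D := by
    by_contra! hno
    -- Otherwise `D` and the complement of its closure disconnect the ray.
    have hcover : ∀ t : ℝ, 0 ≤ t → x + t • (y - x) ∉ D → x + t • (y - x) ∈ (closure D)ᶜ := by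
      intro t ht hD hcl
      exact hno t ht (by rw [hopen.frontier_eq]; exact ⟨hcl, hD⟩)
    have hT : 0 ≤ (R + 1) / ‖y - x‖ := by positivity
    obtain ⟨w, -, hw, hw'⟩ := hpre D (closure D)ᶜ hopen isClosed_closure.isOpen_compl
      (by
        rintro _ ⟨t, ht, rfl⟩
        exact or_iff_not_imp_left.2 (hcover t ht))
      ⟨x, ⟨0, by simp, by simp⟩, hx⟩
      ⟨_, ⟨_, hT, rfl⟩, hcover _ hT hout⟩
    exact hw' (subset_closure hw)
  refine ⟨t, ?_, htf⟩
  by_contra! h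
  rw [hopen.frontier_eq] at htf
  exact htf.2 (hconv.add_smul_sub_mem hx hy ⟨ht, h⟩)

lemma IsFunkDist.eq_log (hdF : IsFunkDist D dF) {x y : EuclideanSpace ℝ (Fin n)} (hx : x ∈ D)
    (hy : y ∈ D) (hxy : x ≠ y) {t : ℝ} (ht : 1 < t) (htf : x + t • (y - x) ∈ frontier D) :
    dF x y = Real.log (t / (t - 1)) := by
  have hpos : 0 < ‖y - x‖ := norm_pos_iff.2 (sub_ne_zero.2 hxy.symm)
  rw [hdF.2 x hx y hy hxy _ htf t (by linarith) rfl]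
  have h1 : x - (x + t • (y - x)) = (-t) • (y - x) := by module
  have h2 : y - (x + t • (y - x)) = (-(t - 1)) • (y - x) := by module
  rw [h1, h2, norm_smul, norm_smul, norm_neg, norm_neg, Real.norm_of_nonneg (by linarith),
    Real.norm_of_nonneg (by linarith), mul_div_mul_right _ _ (ne_of_gt hpos)]

/-- Every affine functional `c - f` positive on `D` bounds the Funk distance from below. -/
lemma log_le_funkDist (hbdd : Bornology.IsBounded D) (hconv : Convex ℝ D) (hopen : IsOpen D)
    (hdF : IsFunkDist D dF) (f : EuclideanSpace ℝ (Fin n) →L[ℝ] ℝ) {c : ℝ}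
    (hf : ∀ w ∈ D, f w < c) {x y : EuclideanSpace ℝ (Fin n)} (hx : x ∈ D) (hy : y ∈ D) :
    Real.log ((c - f x) / (c - f y)) ≤ dF x y := by
  have hfx := sub_pos.2 (hf x hx)
  have hfy := sub_pos.2 (hf y hy)
  rcases eq_or_ne x y with rfl | hxy
  · rw [div_self hfx.ne', Real.log_one, hdF.1 x hx]
  obtain ⟨t, ht, htf⟩ := exists_exit hbdd hconv hopen hx hy hxy
  rw [hdF.eq_log hx hy hxy ht htf]
  have hle : f (x + t • (y - x)) ≤ c :=
    closure_minimal (fun w hw => (hf w hw).le) (isClosed_le f.continuous continuous_const)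
      (frontier_subset_closure htf)
  simp only [map_add, map_smul, map_sub, smul_eq_mul] at hle
  refine Real.log_le_log (div_pos hfx hfy) ?_
  rw [div_le_div_iff₀ hfy (by linarith)]
  linarith

/-- A functional supporting `D` at the exit point realises the Funk distance. -/
lemma exists_funkDist_eq (hbdd : Bornology.IsBounded D) (hconv : Convex ℝ D) (hopen : IsOpen D)
    (hdF : IsFunkDist D dF) {x y : EuclideanSpace ℝ (Fin n)} (hx : x ∈ D) (hy : y ∈ D)
    (hxy : x ≠ y) :
    ∃ (f : EuclideanSpace ℝ (Fin n) →L[ℝ] ℝ) (c : ℝ), (∀ w ∈ D, f w < c) ∧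
      dF x y = Real.log ((c - f x) / (c - f y)) := by
  obtain ⟨t, ht, htf⟩ := exists_exit hbdd hconv hopen hx hy hxy
  have hnot : x + t • (y - x) ∉ D := by
    rw [hopen.frontier_eq] at htf
    exact htf.2
  obtain ⟨f, hf⟩ := geometric_hahn_banach_open_point hconv hopen hnot
  refine ⟨f, _, hf, ?_⟩
  have hfy := sub_pos.2 (hf y hy)
  rw [hdF.eq_log hx hy hxy ht htf]
  congr 1
  rw [div_eq_div_iff (by linarith) hfy.ne']
  simp only [map_add, map_smul, map_sub, smul_eq_mul]
  ring

end

/-- The Funk distance satisfies the triangle inequality on `D`. -/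
theorem funkDist_triangle {n : ℕ} (hn : 1 ≤ n)
    (D : Set (EuclideanSpace ℝ (Fin n))) (hne : D.Nonempty)
    (hbdd : Bornology.IsBounded D) (hconv : Convex ℝ D) (hopen : IsOpen D)
    (dF : EuclideanSpace ℝ (Fin n) → EuclideanSpace ℝ (Fin n) → ℝ)
    (hdF : IsFunkDist D dF) :
    ∀ x ∈ D, ∀ y ∈ D, ∀ z ∈ D, dF x z ≤ dF x y + dF y z := by
  intro x hx y hy z hz
  rcases eq_or_ne x z with rfl | hxz
  · -- The functional `0` with bound `1` gives nonnegativity of `dF`.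
    have h1 := log_le_funkDist hbdd hconv hopen hdF 0 (c := 1) (by simp) hx hy
    have h2 := log_le_funkDist hbdd hconv hopen hdF 0 (c := 1) (by simp) hy hx
    simp at h1 h2
    rw [hdF.1 x hx]
    exact add_nonneg h1 h2
  obtain ⟨f, c, hf, heq⟩ := exists_funkDist_eq hbdd hconv hopen hdF hx hz hxz
  have h1 := log_le_funkDist hbdd hconv hopen hdF f hf hx hy
  have h2 := log_le_funkDist hbdd hconv hopen hdF f hf hy hz
  have hfx := (sub_pos.2 (hf x hx)).ne'
  have hfy := (sub_pos.2 (hf y hy)).ne'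
  have hfz := (sub_pos.2 (hf z hz)).ne'
  rw [Real.log_div hfx hfy] at h1
  rw [Real.log_div hfy hfz] at h2
  rw [heq, Real.log_div hfx hfz]
  linarith
end

section
/- Let D ⊆ ℝⁿ (n ≥ 1) be a nonempty bounded convex open set. For all x, y ∈ D one has d_F(x,y) ≥ 0, and d_F(x,y) = 0 if and only if x = y. -/
/-- The ray from `x` through `y` leaves `D` strictly beyond `y`. -/
lemma exists_frontier_on_ray {n : ℕ} {D : Set (EuclideanSpace ℝ (Fin n))}
    (hbdd : Bornology.IsBounded D) (hopen : IsOpen D)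
    {x y : EuclideanSpace ℝ (Fin n)} (hy : y ∈ D) (hxy : x ≠ y) :
    ∃ t : ℝ, 1 < t ∧ x + t • (y - x) ∈ frontier D := by
  set f : ℝ → EuclideanSpace ℝ (Fin n) := fun t => x + t • (y - x) with hf
  have hcont : Continuous f := by fun_prop
  have hpos : 0 < ‖y - x‖ := norm_pos_iff.mpr (sub_ne_zero.mpr hxy.symm)
  have hf1 : f 1 = y := by simp [hf]
  obtain ⟨R, hR⟩ := hbdd.exists_norm_le
  -- `T` is chosen so that `‖T • (y - x)‖ > R + ‖x‖`, which forces `‖f T‖ > R`.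
  obtain ⟨T, hT⟩ : ∃ T : ℝ, T = (|R| + ‖x‖ + 1) / ‖y - x‖ + 1 := ⟨_, rfl⟩
  have hT1 : 1 ≤ T := by
    have : 0 ≤ (|R| + ‖x‖ + 1) / ‖y - x‖ := by positivity
    linarith
  have hfT : f T ∉ D := by
    intro h
    have h1 := hR _ h
    have h2 : ‖T • (y - x)‖ ≤ ‖f T‖ + ‖x‖ := by
      have h3 : T • (y - x) = f T - x := by simp [hf]
      rw [h3]
      exact norm_sub_le _ _
    rw [norm_smul, Real.norm_of_nonneg (by linarith)] at h2
    have h4 : T * ‖y - x‖ = |R| + ‖x‖ + 1 + ‖y - x‖ := by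
      rw [hT]
      field_simp
    linarith [le_abs_self R]
  have hpre : IsPreconnected (Set.image f (Set.Ici 1)) :=
    isPreconnected_Ici.image f hcont.continuousOn
  obtain ⟨z, ⟨t, ht, rfl⟩, hz⟩ : (Set.image f (Set.Ici 1) ∩ frontier D).Nonempty := by
    by_contra hno
    -- Otherwise the ray beyond `y` is separated by the open sets `D` and `(closure D)ᶜ`.
    have hcl : ∀ z ∈ Set.image f (Set.Ici 1), z ∉ D → z ∈ (closure D)ᶜ := fun z hz hzD hzc =>
      hno ⟨z, hz, by rw [hopen.frontier_eq]; exact ⟨hzc, hzD⟩⟩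
    have hyS : y ∈ Set.image f (Set.Ici 1) := ⟨1, Set.self_mem_Ici, hf1⟩
    have hTS : f T ∈ Set.image f (Set.Ici 1) := ⟨T, hT1, rfl⟩
    obtain ⟨z, -, hzD, hzc⟩ := hpre D (closure D)ᶜ hopen isClosed_closure.isOpen_compl
      (fun z hz => or_iff_not_imp_left.mpr (hcl z hz)) ⟨y, hyS, hy⟩ ⟨f T, hTS, hcl _ hTS hfT⟩
    exact hzc (subset_closure hzD)
  refine ⟨t, lt_of_le_of_ne ht ?_, hz⟩
  rintro rfl
  rw [hf1, hopen.frontier_eq] at hz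
  exact hz.2 hy

/-- `d_F(x,y) ≥ 0` with equality iff `x = y`. -/
theorem funkDist_nonneg_eq_zero_iff {n : ℕ} (hn : 1 ≤ n)
    (D : Set (EuclideanSpace ℝ (Fin n))) (hne : D.Nonempty)
    (hbdd : Bornology.IsBounded D) (hconv : Convex ℝ D) (hopen : IsOpen D)
    (dF : EuclideanSpace ℝ (Fin n) → EuclideanSpace ℝ (Fin n) → ℝ)
    (hdF : IsFunkDist D dF) :
    ∀ x ∈ D, ∀ y ∈ D, 0 ≤ dF x y ∧ (dF x y = 0 ↔ x = y) := by
  intro x hx y hy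
  by_cases hxy : x = y
  · subst hxy
    simp [hdF.1 x hx]
  · obtain ⟨t, ht, hfr⟩ := exists_frontier_on_ray hbdd hopen hy hxy
    have hpos : 0 < ‖y - x‖ := norm_pos_iff.mpr (sub_ne_zero.mpr (Ne.symm hxy))
    have hd := hdF.2 x hx y hy hxy _ hfr t (by linarith) rfl
    have h1 : ‖x - (x + t • (y - x))‖ = t * ‖y - x‖ := by
      rw [sub_add_cancel_left, norm_neg, norm_smul, Real.norm_of_nonneg (by linarith)]
    have h2 : ‖y - (x + t • (y - x))‖ = (t - 1) * ‖y - x‖ := by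
      rw [show y - (x + t • (y - x)) = -((t - 1) • (y - x)) by module, norm_neg, norm_smul,
        Real.norm_of_nonneg (by linarith)]
    have hlt : 0 < dF x y := by
      rw [hd, h1, h2]
      apply Real.log_pos
      rw [one_lt_div (mul_pos (by linarith) hpos)]
      nlinarith
    exact ⟨hlt.le, fun h => absurd h hlt.ne', fun h => absurd h hxy⟩
end

section
/- Let D ⊆ ℝⁿ (n ≥ 1) be a nonempty bounded convex open set. Line segments are minimizing for the Hilbert distance: for all x, z ∈ D and s ∈ [0,1], setting y := (1−s) • x + s • z, one has d_H(x,y) + d_H(y,z) = d_H(x,z). -/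
/-!
Fix `x ≠ z` in `D` and parametrize the line through them by `t ↦ x + t • (z - x)`. As `D` is open
and bounded, the rays leaving `x` and `z` in opposite directions hit the frontier
(`exists_pos_mem_frontier`), at parameters `a < 0` and `b > 1`. The same two frontier points serve
every pair of points of the segment, so `hilbertDist_line` expresses the distance between the points
with parameters `p ≤ q` in `[0, 1]` as
`(1/2) log (((q - a) (b - p)) / ((p - a) (b - q)))`.
This is `φ q - φ p` for `φ t = (1/2) (log (t - a) - log (b - t))`, and the claim telescopes.
-/

/-- `dH` is the Hilbert distance of the bounded convex open set `D`: `dH x x = 0`, and for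
distinct `x, y ∈ D`, if `x'` and `y'` are the two points where the line through `x` and `y`
meets the frontier of `D`, labeled so that `x` lies strictly between `x'` and `y` and `y`
lies strictly between `x` and `y'`, then
`dH x y = (1/2) log ((‖x' − y‖ ‖x − y'‖)/(‖x' − x‖ ‖y − y'‖))`. -/
def IsHilbertDist {n : ℕ} (D : Set (EuclideanSpace ℝ (Fin n)))
    (dH : EuclideanSpace ℝ (Fin n) → EuclideanSpace ℝ (Fin n) → ℝ) : Prop :=
  (∀ x ∈ D, dH x x = 0) ∧
  ∀ x ∈ D, ∀ y ∈ D, x ≠ y → ∀ x' ∈ frontier D, ∀ y' ∈ frontier D, ∀ s t : ℝ,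
    s < 0 → 1 < t → x' = x + s • (y - x) → y' = x + t • (y - x) →
    dH x y = (1 / 2) * Real.log ((‖x' - y‖ * ‖x - y'‖) / (‖x' - x‖ * ‖y - y'‖))

/-- A ray issuing from a point of a bounded open set meets the frontier of the set. -/
theorem exists_pos_mem_frontier {n : ℕ} {D : Set (EuclideanSpace ℝ (Fin n))}
    (hbdd : Bornology.IsBounded D) (hopen : IsOpen D) {x v : EuclideanSpace ℝ (Fin n)}
    (hx : x ∈ D) (hv : v ≠ 0) : ∃ t : ℝ, 0 < t ∧ x + t • v ∈ frontier D := by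
  have hpre : IsPreconnected ((fun t : ℝ => x + t • v) '' Set.Ici 0) :=
    isPreconnected_Ici.image _ (by fun_prop)
  have hin : ((fun t : ℝ => x + t • v) '' Set.Ici 0 ∩ D).Nonempty :=
    ⟨x, ⟨0, by simp, by simp⟩, hx⟩
  have hout : ((fun t : ℝ => x + t • v) '' Set.Ici 0 ∩ Dᶜ).Nonempty := by
    obtain ⟨R, hR⟩ := hbdd.exists_norm_le
    have hv' : 0 < ‖v‖ := norm_pos_iff.2 hv
    have hR0 : 0 ≤ R := (norm_nonneg x).trans (hR x hx)
    -- At this parameter the ray has moved by `R + ‖x‖ + 1`, so it has left the ball of radius `R`.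
    set t : ℝ := (R + ‖x‖ + 1) / ‖v‖ with ht
    have ht0 : 0 ≤ t := by positivity
    refine ⟨x + t • v, ⟨t, ht0, rfl⟩, fun hmem => ?_⟩
    have h1 : ‖t • v‖ = R + ‖x‖ + 1 := by
      rw [norm_smul, Real.norm_of_nonneg ht0, ht, div_mul_cancel₀ _ hv'.ne']
    have h2 : ‖t • v‖ ≤ ‖x + t • v‖ + ‖x‖ := by
      simpa using norm_sub_le (x + t • v) x
    linarith [hR _ hmem]
  have hfront : ∃ t : ℝ, 0 ≤ t ∧ x + t • v ∈ frontier D := by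
    by_contra! hno
    obtain ⟨w, hw, hwD⟩ := hout
    refine hwD (hpre.subset_of_closure_inter_subset hopen hin ?_ hw)
    rintro _ ⟨hcl, t, ht, rfl⟩
    by_contra hnot
    exact hno t ht (hopen.frontier_eq ▸ ⟨hcl, hnot⟩)
  obtain ⟨t, ht, hf⟩ := hfront
  refine ⟨t, lt_of_le_of_ne ht ?_, hf⟩
  rintro rfl
  rw [hopen.frontier_eq] at hf
  exact hf.2 (by simpa using hx)

/-- The Hilbert distance between two points of a line, in terms of the parameters `a < b` of two
frontier points on it. The formula remains valid for `p = q`, where the logarithm vanishes. -/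
theorem hilbertDist_line {n : ℕ} {D : Set (EuclideanSpace ℝ (Fin n))}
    {dH : EuclideanSpace ℝ (Fin n) → EuclideanSpace ℝ (Fin n) → ℝ}
    (hdH : IsHilbertDist D dH) {x v : EuclideanSpace ℝ (Fin n)} (hv : v ≠ 0) {a b p q : ℝ}
    (ha : x + a • v ∈ frontier D) (hb : x + b • v ∈ frontier D)
    (hp : x + p • v ∈ D) (hq : x + q • v ∈ D) (hap : a < p) (hpq : p ≤ q) (hqb : q < b) :
    dH (x + p • v) (x + q • v) =
      (1 / 2) * ((Real.log (q - a) - Real.log (b - q)) -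
        (Real.log (p - a) - Real.log (b - p))) := by
  rcases hpq.eq_or_lt with rfl | hlt
  · rw [hdH.1 _ hp]; ring
  have hsub : ∀ r t : ℝ, (x + r • v) - (x + t • v) = (r - t) • v := fun r t => by module
  have hqp : 0 < q - p := sub_pos.2 hlt
  have hne : x + p • v ≠ x + q • v := by
    intro h
    have h' := sub_eq_zero.2 h
    rw [hsub, smul_eq_zero] at h'
    rcases h' with h' | h'
    · linarith
    · exact hv h'
  have hpar : ∀ c : ℝ, x + c • v =
      (x + p • v) + ((c - p) / (q - p)) • ((x + q • v) - (x + p • v)) := fun c => by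
    rw [hsub, smul_smul, div_mul_cancel₀ _ hqp.ne']
    module
  have hv' : ‖v‖ ≠ 0 := norm_ne_zero_iff.2 hv
  have h1 : 0 < q - a := by linarith
  have h2 : 0 < b - p := by linarith
  have h3 : 0 < p - a := by linarith
  have h4 : 0 < b - q := by linarith
  rw [hdH.2 _ hp _ hq hne _ ha _ hb ((a - p) / (q - p)) ((b - p) / (q - p))
    (div_neg_of_neg_of_pos (by linarith) hqp) ((one_lt_div hqp).2 (by linarith))
    (hpar a) (hpar b)]
  have hratio : (‖(x + a • v) - (x + q • v)‖ * ‖(x + p • v) - (x + b • v)‖) /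
      (‖(x + a • v) - (x + p • v)‖ * ‖(x + q • v) - (x + b • v)‖) =
      ((q - a) * (b - p)) / ((p - a) * (b - q)) := by
    simp only [hsub, norm_smul, Real.norm_eq_abs]
    rw [abs_sub_comm a q, abs_sub_comm p b, abs_sub_comm a p, abs_sub_comm q b,
      abs_of_pos h1, abs_of_pos h2, abs_of_pos h3, abs_of_pos h4]
    field_simp
  rw [hratio, Real.log_div (by positivity) (by positivity), Real.log_mul h1.ne' h2.ne',
    Real.log_mul h3.ne' h4.ne']
  ring

/-- Line segments are minimizing for the Hilbert distance. -/
theorem hilbertDist_segment_minimizing {n : ℕ} (hn : 1 ≤ n)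
    (D : Set (EuclideanSpace ℝ (Fin n))) (hne : D.Nonempty)
    (hbdd : Bornology.IsBounded D) (hconv : Convex ℝ D) (hopen : IsOpen D)
    (dH : EuclideanSpace ℝ (Fin n) → EuclideanSpace ℝ (Fin n) → ℝ)
    (hdH : IsHilbertDist D dH) :
    ∀ x ∈ D, ∀ z ∈ D, ∀ s : ℝ, s ∈ Set.Icc (0 : ℝ) 1 →
      dH x ((1 - s) • x + s • z) + dH ((1 - s) • x + s • z) z = dH x z := by
  intro x hx z hz s hs
  rcases eq_or_ne x z with rfl | hxz
  · rw [← add_smul, sub_add_cancel, one_smul, hdH.1 x hx, add_zero]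
  have hv : z - x ≠ 0 := sub_ne_zero.2 hxz.symm
  obtain ⟨t, ht, htf⟩ := exists_pos_mem_frontier hbdd hopen hz hv
  obtain ⟨r, hr, hrf⟩ := exists_pos_mem_frontier hbdd hopen hx (neg_ne_zero.2 hv)
  have hb : x + (1 + t) • (z - x) ∈ frontier D := by
    convert htf using 1
    module
  have ha : x + (-r) • (z - x) ∈ frontier D := by
    convert hrf using 1
    module
  have hy : (1 - s) • x + s • z = x + s • (z - x) := by module
  have hyD : x + s • (z - x) ∈ D :=
    hy ▸ hconv hx hz (sub_nonneg.2 hs.2) hs.1 (sub_add_cancel 1 s)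
  have hx0 : x + (0 : ℝ) • (z - x) = x := by module
  have hz1 : x + (1 : ℝ) • (z - x) = z := by module
  have hxD : x + (0 : ℝ) • (z - x) ∈ D := by rwa [hx0]
  have hzD : x + (1 : ℝ) • (z - x) ∈ D := by rwa [hz1]
  have hs0 := hs.1
  have hs1 := hs.2
  have e1 := hilbertDist_line hdH hv ha hb hxD hyD (by linarith) hs0 (by linarith)
  have e2 := hilbertDist_line hdH hv ha hb hyD hzD (by linarith) hs1 (by linarith)
  have e3 := hilbertDist_line hdH hv ha hb hxD hzD (by linarith) zero_le_one (by linarith)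
  rw [hx0] at e1 e3
  rw [hz1] at e2 e3
  rw [hy, e1, e2, e3]
  ring
end

section
/- Let D be the open unit ball of ℝⁿ (n ≥ 1). Then (D, d_H) is the Klein model of hyperbolic space: for all x, y ∈ D, cosh(d_H(x,y)) = (1 − ⟪x, y⟫) / √((1 − ‖x‖²)(1 − ‖y‖²)), where ⟪·,·⟫ is the Euclidean inner product. -/
open RealInnerProductSpace

lemma cosh_half_log_div {a b : ℝ} (ha : 0 < a) (hb : 0 < b) :
    Real.cosh ((1 / 2) * Real.log (a / b)) = (a + b) / (2 * Real.sqrt (a * b)) := by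
  have hsa := Real.sqrt_pos.2 ha
  have hsb := Real.sqrt_pos.2 hb
  have h : (1 / 2) * Real.log (a / b) = Real.log (Real.sqrt a / Real.sqrt b) := by
    rw [Real.log_div hsa.ne' hsb.ne', Real.log_sqrt ha.le, Real.log_sqrt hb.le,
      Real.log_div ha.ne' hb.ne']
    ring
  rw [h, Real.cosh_log (div_pos hsa hsb), Real.sqrt_mul ha.le]
  field_simp
  rw [Real.sq_sqrt ha.le, Real.sq_sqrt hb.le]

/-- A quadratic with positive leading coefficient `A`, negative at `0` (value `-C`) and at `1`
(value `-E`), has a root on each side of `[0, 1]`. Vieta's formulas are recorded in the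
forms `s + t`, `s t` and `(1 - s) (t - 1)`. -/
lemma exists_roots_around_unit_interval {A p C E : ℝ} (hA : 0 < A) (hC : 0 < C) (hE : 0 < E)
    (h1 : A + 2 * p - C = -E) :
    ∃ s t : ℝ, s < 0 ∧ 1 < t ∧ A * s ^ 2 + 2 * p * s - C = 0 ∧ A * t ^ 2 + 2 * p * t - C = 0 ∧
      s + t = -2 * p / A ∧ s * t = -C / A ∧ (1 - s) * (t - 1) = E / A := by
  have hAC := mul_pos hA hC
  have hAE := mul_pos hA hE
  have hq : Real.sqrt (p ^ 2 + A * C) ^ 2 = p ^ 2 + A * C := Real.sq_sqrt (by positivity)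
  have hq0 : |p| < Real.sqrt (p ^ 2 + A * C) := Real.lt_sqrt_of_sq_lt (by rw [sq_abs]; linarith)
  -- The discriminant also equals `(A + p)² + A E`, which places the larger root beyond `1`.
  have hq1 : |A + p| < Real.sqrt (p ^ 2 + A * C) :=
    Real.lt_sqrt_of_sq_lt (by rw [sq_abs]; nlinarith)
  generalize Real.sqrt (p ^ 2 + A * C) = q at *
  have hp := abs_lt.1 hq0
  have hp1 := abs_lt.1 hq1
  obtain rfl : E = C - A - 2 * p := by linarith
  refine ⟨(-p - q) / A, (-p + q) / A, div_neg_of_neg_of_pos (by linarith) hA,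
    (one_lt_div hA).2 (by linarith), ?_, ?_, ?_, ?_, ?_⟩
  all_goals
    field_simp
    first
    | ring1
    | linear_combination hq
    | linear_combination -hq

/-- On the open unit ball, the Hilbert metric is the Klein model of
hyperbolic space: `cosh (d_H(x,y)) = (1 − ⟪x,y⟫)/√((1 − ‖x‖²)(1 − ‖y‖²))`. -/
theorem hilbertDist_unitBall_klein {n : ℕ} (hn : 1 ≤ n)
    (dH : EuclideanSpace ℝ (Fin n) → EuclideanSpace ℝ (Fin n) → ℝ)
    (hdH : IsHilbertDist (Metric.ball (0 : EuclideanSpace ℝ (Fin n)) 1) dH) :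
    ∀ x ∈ Metric.ball (0 : EuclideanSpace ℝ (Fin n)) 1,
      ∀ y ∈ Metric.ball (0 : EuclideanSpace ℝ (Fin n)) 1,
        Real.cosh (dH x y) =
          (1 - ⟪x, y⟫) / Real.sqrt ((1 - ‖x‖ ^ 2) * (1 - ‖y‖ ^ 2)) := by
  intro x hx y hy
  have hx1 : ‖x‖ < 1 := by simpa using hx
  have hy1 : ‖y‖ < 1 := by simpa using hy
  have hC : 0 < 1 - ‖x‖ ^ 2 := by nlinarith [norm_nonneg x]
  have hE : 0 < 1 - ‖y‖ ^ 2 := by nlinarith [norm_nonneg y]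
  rcases eq_or_ne x y with rfl | hxy
  · rw [hdH.1 x hx, Real.cosh_zero, real_inner_self_eq_norm_sq, Real.sqrt_mul_self hC.le,
      div_self hC.ne']
  have hv : 0 < ‖y - x‖ := norm_pos_iff.2 (sub_ne_zero.2 hxy.symm)
  have hA : 0 < ‖y - x‖ ^ 2 := by positivity
  have hnorm (r : ℝ) : ‖x + r • (y - x)‖ ^ 2 =
      ‖x‖ ^ 2 + 2 * ⟪x, y - x⟫ * r + ‖y - x‖ ^ 2 * r ^ 2 := by
    rw [norm_add_sq_real, real_inner_smul_right, norm_smul, mul_pow, Real.norm_eq_abs, sq_abs]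
    ring
  have hyn : ‖y‖ ^ 2 = ‖x‖ ^ 2 + 2 * ⟪x, y - x⟫ + ‖y - x‖ ^ 2 := by simpa using hnorm 1
  have hin : ⟪x, y⟫ = ‖x‖ ^ 2 + ⟪x, y - x⟫ := by
    rw [inner_sub_right, real_inner_self_eq_norm_sq]
    ring
  obtain ⟨s, t, hs, ht, hs0, ht0, hsum, hprod, hone⟩ :=
    exists_roots_around_unit_interval (p := ⟪x, y - x⟫) hA hC hE (by linarith)
  have hfr (r : ℝ) (hr : ‖y - x‖ ^ 2 * r ^ 2 + 2 * ⟪x, y - x⟫ * r - (1 - ‖x‖ ^ 2) = 0) :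
      x + r • (y - x) ∈ frontier (Metric.ball (0 : EuclideanSpace ℝ (Fin n)) 1) := by
    rw [frontier_ball _ one_ne_zero, mem_sphere_zero_iff_norm,
      ← sq_eq_sq₀ (norm_nonneg _) zero_le_one, hnorm]
    linarith
  rw [hdH.2 x hx y hy hxy _ (hfr s hs0) _ (hfr t ht0) s t hs ht rfl rfl]
  have e1 : ‖x + s • (y - x) - y‖ = (1 - s) * ‖y - x‖ := by
    rw [show x + s • (y - x) - y = (s - 1) • (y - x) by module, norm_smul, Real.norm_eq_abs,
      abs_of_neg (by linarith), neg_sub]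
  have e2 : ‖x - (x + t • (y - x))‖ = t * ‖y - x‖ := by
    rw [show x - (x + t • (y - x)) = (-t) • (y - x) by module, norm_smul, Real.norm_eq_abs,
      abs_neg, abs_of_pos (by linarith)]
  have e3 : ‖x + s • (y - x) - x‖ = -s * ‖y - x‖ := by
    rw [add_sub_cancel_left, norm_smul, Real.norm_eq_abs, abs_of_neg hs]
  have e4 : ‖y - (x + t • (y - x))‖ = (t - 1) * ‖y - x‖ := by
    rw [show y - (x + t • (y - x)) = (1 - t) • (y - x) by module, norm_smul, Real.norm_eq_abs,
      abs_of_neg (by linarith), neg_sub]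
  have hcr : (1 - s) * ‖y - x‖ * (t * ‖y - x‖) / (-s * ‖y - x‖ * ((t - 1) * ‖y - x‖)) =
      ((1 - s) * t) / (-s * (t - 1)) := by
    rw [mul_mul_mul_comm, mul_mul_mul_comm (-s),
      mul_div_mul_right _ _ (mul_pos hv hv).ne']
  rw [e1, e2, e3, e4, hcr, cosh_half_log_div (mul_pos (by linarith) (by linarith))
    (mul_pos (by linarith) (by linarith))]
  have hab : (1 - s) * t * (-s * (t - 1)) =
      ((1 - ‖x‖ ^ 2) * (1 - ‖y‖ ^ 2)) / (‖y - x‖ ^ 2) ^ 2 := by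
    calc (1 - s) * t * (-s * (t - 1)) = -(s * t) * ((1 - s) * (t - 1)) := by ring
      _ = _ := by
        rw [hprod, hone]
        field_simp
  have hadd : (1 - s) * t + -s * (t - 1) = 2 * (1 - ⟪x, y⟫) / ‖y - x‖ ^ 2 := by
    calc (1 - s) * t + -s * (t - 1) = (s + t) - 2 * (s * t) := by ring
      _ = _ := by
        rw [hsum, hprod, hin]
        field_simp
        ring
  have hsq := Real.sqrt_pos.2 (mul_pos hC hE)
  rw [hab, hadd, Real.sqrt_div (mul_pos hC hE).le, Real.sqrt_sq hA.le]
  field_simp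
end

section
/- Let D ⊆ ℝⁿ (n ≥ 1) be a nonempty bounded convex open set. The Hilbert distance is realized by the Hilbert Finsler structure F_H(x,v) := (gauge (D − x) v + gauge (D − x) (−v))/2: for all x, y ∈ D, d_H(x,y) equals the infimum, over all continuously differentiable curves η : [0,1] → D with η(0) = x and η(1) = y, of ∫₀¹ (gauge (D − η(t)) (η'(t)) + gauge (D − η(t)) (−η'(t)))/2 dt. -/
open Topology

section Aux

variable {E : Type*} [NormedAddCommGroup E] [NormedSpace ℝ E] {D : Set E}

theorem image_sub_eq_preimage {E : Type*} [AddCommGroup E] (D : Set E) (p : E) : (· - p) '' D = (p + ·) ⁻¹' D := by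
  ext z
  constructor
  · rintro ⟨w, hw, rfl⟩
    simpa using hw
  · intro hz
    exact ⟨p + z, hz, by simp⟩

theorem convex_translate (hconv : Convex ℝ D) (p : E) : Convex ℝ ((· - p) '' D) := by
  rw [image_sub_eq_preimage]
  exact hconv.translate_preimage_right p

theorem translate_mem_nhds (hopen : IsOpen D) {p : E} (hp : p ∈ D) :
    (· - p) '' D ∈ 𝓝 (0 : E) := by
  rw [image_sub_eq_preimage]
  exact (hopen.preimage (by fun_prop)).mem_nhds (by simpa using hp)

/-- The sublevel sets of the Finsler half-norm in terms of membership in `D`. Both the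
measurability of the length integrand and the two-sided estimates of the gauge rest on it. -/
theorem gauge_translate_lt_iff (hconv : Convex ℝ D) (hopen : IsOpen D) {p v : E} (hp : p ∈ D)
    {a : ℝ} (ha : 0 < a) : gauge ((· - p) '' D) v < a ↔ p + a⁻¹ • v ∈ D := by
  have h0 := translate_mem_nhds hopen hp
  have ho : IsOpen ((· - p) '' D) := by
    rw [image_sub_eq_preimage]; exact hopen.preimage (by fun_prop)
  have h1 : gauge ((· - p) '' D) (a⁻¹ • v) < 1 ↔ a⁻¹ • v ∈ (· - p) '' D := by
    have := setOfPred_gauge_lt_one_eq_self_of_isOpen (convex_translate hconv p) (mem_of_mem_nhds h0) ho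
    exact Set.ext_iff.1 this (a⁻¹ • v)
  rw [gauge_smul_of_nonneg (inv_nonneg.2 ha.le), smul_eq_mul, inv_mul_lt_iff₀ ha, mul_one] at h1
  rw [h1, image_sub_eq_preimage]
  rfl

/-- A supporting functional of `D` at `q` bounds the gauge from below by a logarithmic
derivative. -/
theorem support_le_gauge (hconv : Convex ℝ D) (hopen : IsOpen D) {p q v : E} (hp : p ∈ D)
    {l : StrongDual ℝ E} (hl : ∀ z ∈ D, l z < l q) :
    l v / (l q - l p) ≤ gauge ((· - p) '' D) v := by
  refine le_of_forall_gt fun a ha => ?_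
  have ha0 : 0 < a := (gauge_nonneg _).trans_lt ha
  have h := hl _ ((gauge_translate_lt_iff hconv hopen hp ha0).1 ha)
  have hpq : 0 < l q - l p := sub_pos.2 (hl p hp)
  rw [map_add, map_smul, smul_eq_mul] at h
  rw [div_lt_iff₀ hpq, ← inv_mul_lt_iff₀ ha0]
  linarith

/-- Along a ray that leaves `D` at `q = x + T • w`, the bound of `support_le_gauge` is attained. -/
theorem gauge_on_ray (hconv : Convex ℝ D) (hopen : IsOpen D) {x w : E} {T t : ℝ} (hx : x ∈ D)
    (hq : x + T • w ∈ frontier D) (ht0 : 0 ≤ t) (htT : t < T)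
    {l : StrongDual ℝ E} (hl : ∀ z ∈ D, l z < l (x + T • w)) :
    gauge ((· - (x + t • w)) '' D) w = l w / (l (x + T • w) - l (x + t • w)) := by
  have hT : 0 < T := ht0.trans_lt htT
  have hmem : ∀ τ, 0 ≤ τ → τ < T → x + τ • w ∈ D := by
    intro τ h0 h1
    have := hconv.combo_interior_closure_mem_interior (x := x) (y := x + T • w)
      (by rwa [hopen.interior_eq]) (frontier_subset_closure hq) (a := 1 - τ / T) (b := τ / T)
      (by rw [sub_pos, div_lt_one hT]; exact h1) (by positivity) (by ring)
    rw [hopen.interior_eq] at this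
    convert this using 1
    rw [smul_add, smul_smul, div_mul_cancel₀ _ hT.ne']
    module
  have hp := hmem t ht0 htT
  refine le_antisymm ?_ (support_le_gauge hconv hopen hp hl)
  have hlw : 0 < l w := by
    have := hl x hx
    rw [map_add, map_smul, smul_eq_mul] at this
    exact pos_of_mul_pos_right (by linarith : 0 < T * l w) hT.le
  have hval : l w / (l (x + T • w) - l (x + t • w)) = (T - t)⁻¹ := by
    have : 0 < T - t := sub_pos.2 htT
    have e : l (x + T • w) - l (x + t • w) = (T - t) * l w := by
      simp only [map_add, map_smul, smul_eq_mul]; ring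
    rw [e]
    field_simp
  rw [hval]
  refine le_of_forall_gt fun a ha => ?_
  have hTt : 0 < T - t := sub_pos.2 htT
  have ha0 : 0 < a := (inv_pos.2 hTt).trans ha
  rw [gauge_translate_lt_iff hconv hopen hp ha0, add_assoc, ← add_smul]
  refine hmem _ (by positivity) ?_
  have := inv_lt_of_inv_lt₀ hTt ha
  linarith

theorem exists_ray_frontier (hbdd : Bornology.IsBounded D) (hconv : Convex ℝ D)
    (hopen : IsOpen D) {x w : E} (hx : x ∈ D) (hw : w ≠ 0) :
    ∃ T : ℝ, 0 < T ∧ x + T • w ∈ frontier D ∧ (x + w ∈ D → 1 < T) := by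
  have h0 := translate_mem_nhds hopen hx
  have hb : Bornology.IsVonNBounded ℝ ((· - x) '' D) := by
    rw [NormedSpace.isVonNBounded_iff]
    have := (hbdd.add (Bornology.isBounded_singleton (x := -x)))
    rw [Set.add_singleton] at this
    simpa [sub_eq_add_neg] using this
  have hg : 0 < gauge ((· - x) '' D) w := (gauge_pos (absorbent_nhds_zero h0) hb).2 hw
  refine ⟨(gauge ((· - x) '' D) w)⁻¹, inv_pos.2 hg, ?_, fun h => ?_⟩
  · have h1 : gauge ((· - x) '' D) ((gauge ((· - x) '' D) w)⁻¹ • w) = 1 := by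
      rw [gauge_smul_of_nonneg (inv_nonneg.2 hg.le), smul_eq_mul, inv_mul_cancel₀ hg.ne']
    rw [gauge_eq_one_iff_mem_frontier (convex_translate hconv x) h0] at h1
    have e : frontier ((· - x) '' D) = (x + ·) ⁻¹' frontier D := by
      rw [image_sub_eq_preimage]
      exact ((Homeomorph.addLeft x).preimage_frontier D).symm
    rw [e] at h1
    exact h1
  · refine (one_lt_inv₀ hg).2 ?_
    rw [gauge_translate_lt_iff hconv hopen hx one_pos]
    simpa using h

theorem exists_support (hconv : Convex ℝ D) (hopen : IsOpen D) {q : E} (hq : q ∈ frontier D) :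
    ∃ l : StrongDual ℝ E, ∀ z ∈ D, l z < l q := by
  refine geometric_hahn_banach_open_point hconv hopen fun h => ?_
  rw [hopen.frontier_eq] at hq
  exact hq.2 h

/-- The gauge of a continuous vector field along a continuous curve in `D` is integrable: its sublevel sets are relatively open, and
it is bounded because the compact curve keeps a positive distance from the complement of `D`. -/
theorem gauge_intervalIntegrable (hconv : Convex ℝ D) (hopen : IsOpen D) {η u : ℝ → E}
    (hη : Continuous η) (hu : Continuous u) (hD : ∀ t ∈ Set.Icc (0 : ℝ) 1, η t ∈ D) :
    IntervalIntegrable (fun t => gauge ((· - η t) '' D) (u t)) MeasureTheory.volume 0 1 := by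
  rw [intervalIntegrable_iff_integrableOn_Icc_of_le zero_le_one]
  have hmeas : Measurable fun t : Set.Icc (0 : ℝ) 1 => gauge ((· - η t) '' D) (u t) := by
    refine measurable_of_Iio fun a => ?_
    rcases le_or_gt a 0 with ha | ha
    · convert MeasurableSet.empty
      ext t
      simpa using ha.trans (gauge_nonneg _)
    · have : (fun t : Set.Icc (0 : ℝ) 1 => gauge ((· - η t) '' D) (u t)) ⁻¹' Set.Iio a =
          (fun t : Set.Icc (0 : ℝ) 1 => η t + a⁻¹ • u t) ⁻¹' D := by
        ext t
        exact gauge_translate_lt_iff hconv hopen (hD t t.2) ha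
      rw [this]
      exact (hopen.preimage (by fun_prop)).measurableSet
  obtain ⟨δ, hδ, hsub⟩ := (isCompact_Icc.image hη).exists_thickening_subset_open hopen
    (Set.image_subset_iff.2 hD)
  obtain ⟨C, hC⟩ := (isCompact_Icc (a := (0 : ℝ)) (b := 1)).exists_bound_of_continuousOn
    hu.continuousOn
  refine MeasureTheory.IntegrableOn.of_bound (C := C / δ) (by simp)
    (aemeasurable_restrict_of_measurable_subtype measurableSet_Icc hmeas).aestronglyMeasurable ?_
  refine (MeasureTheory.ae_restrict_iff' measurableSet_Icc).2 (.of_forall fun t ht => ?_)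
  rw [Real.norm_of_nonneg (gauge_nonneg _), le_div_iff₀ hδ, mul_comm]
  refine le_trans (mul_gauge_le_norm fun z hz => ?_) (hC t ht)
  rw [image_sub_eq_preimage]
  refine hsub (Metric.mem_thickening_iff.2 ⟨η t, ⟨t, ht, rfl⟩, ?_⟩)
  simpa using hz

/-- Half the logarithm of the ratio of the heights of `z` below the level of `m` at `q'` and below
the level of `l` at `q`; when `l` and `m` support `D` at `q` and `q'`, its derivative along a curve
in `D` is a lower bound for the Finsler norm of the velocity. -/
noncomputable def crossPotential (l m : StrongDual ℝ E) (q q' : E) (z : E) : ℝ :=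
  (Real.log (m q' - m z) - Real.log (l q - l z)) / 2

theorem hasDerivAt_crossPotential {l m : StrongDual ℝ E} {q q' : E} {η : ℝ → E} {t : ℝ} {v : E}
    (hη : HasDerivAt η v t) (h1 : l (η t) < l q) (h2 : m (η t) < m q') :
    HasDerivAt (fun t => crossPotential l m q q' (η t))
      ((l v / (l q - l (η t)) + m (-v) / (m q' - m (η t))) / 2) t := by
  have a1 : HasDerivAt (fun t => l q - l (η t)) (-(l v)) t :=
    (l.hasFDerivAt.comp_hasDerivAt t hη).const_sub _
  have a2 : HasDerivAt (fun t => m q' - m (η t)) (-(m v)) t :=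
    (m.hasFDerivAt.comp_hasDerivAt t hη).const_sub _
  have := ((a2.log (sub_pos.2 h2).ne').sub (a1.log (sub_pos.2 h1).ne')).div_const 2
  refine this.congr_deriv ?_
  rw [map_neg]
  ring

end Aux

/-- The Hilbert distance is realized by the Hilbert Finsler structure
`F_H(x,v) = (gauge (D − x) v + gauge (D − x) (−v))/2`: `d_H(x,y)` is the infimum of the
Finsler lengths over C¹ curves `η` in `D` from `x` to `y`. -/
theorem hilbertDist_eq_inf_finsler_length {n : ℕ} (hn : 1 ≤ n)
    (D : Set (EuclideanSpace ℝ (Fin n))) (hne : D.Nonempty)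
    (hbdd : Bornology.IsBounded D) (hconv : Convex ℝ D) (hopen : IsOpen D)
    (dH : EuclideanSpace ℝ (Fin n) → EuclideanSpace ℝ (Fin n) → ℝ)
    (hdH : IsHilbertDist D dH) :
    ∀ x ∈ D, ∀ y ∈ D,
      dH x y = sInf { L : ℝ | ∃ η : ℝ → EuclideanSpace ℝ (Fin n),
        ContDiff ℝ 1 η ∧ (∀ t ∈ Set.Icc (0 : ℝ) 1, η t ∈ D) ∧
        η 0 = x ∧ η 1 = y ∧
        L = ∫ t in (0 : ℝ)..1,
          (gauge ((· - η t) '' D) (deriv η t) +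
            gauge ((· - η t) '' D) (-(deriv η t))) / 2 } := by
  intro x hx y hy
  refine (IsLeast.csInf_eq ?_).symm
  rcases eq_or_ne x y with rfl | hxy
  · rw [hdH.1 x hx]
    refine ⟨⟨fun _ => x, contDiff_const, fun _ _ => hx, rfl, rfl, by simp⟩, ?_⟩
    rintro L ⟨η, -, -, -, -, rfl⟩
    refine intervalIntegral.integral_nonneg zero_le_one fun t _ => ?_
    have := gauge_nonneg (s := (· - η t) '' D) (deriv η t)
    have := gauge_nonneg (s := (· - η t) '' D) (-(deriv η t))
    positivity
  have hv : y - x ≠ 0 := sub_ne_zero.2 hxy.symm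
  obtain ⟨T, hT0, hT, hT1⟩ := exists_ray_frontier hbdd hconv hopen hx hv
  obtain ⟨S, hS0, hS, hS1⟩ := exists_ray_frontier hbdd hconv hopen hy (neg_ne_zero.2 hv)
  replace hT1 : 1 < T := hT1 (by simpa using hy)
  replace hS1 : 1 < S := hS1 (by simpa using hx)
  obtain ⟨l, hl⟩ := exists_support hconv hopen hT
  obtain ⟨m, hm⟩ := exists_support hconv hopen hS
  have hd := hdH.2 x hx y hy hxy _ hS _ hT (1 - S) T (by linarith) hT1 (by module) rfl
  have hval : dH x y = crossPotential l m (x + T • (y - x)) (y + S • -(y - x)) y -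
      crossPotential l m (x + T • (y - x)) (y + S • -(y - x)) x := by
    have hlv : 0 < l (y - x) := by
      have := hl x hx
      rw [map_add, map_smul, smul_eq_mul] at this
      exact pos_of_mul_pos_right (by linarith : 0 < T * l (y - x)) hT0.le
    have hmv : 0 < m (x - y) := by
      have := hm y hy
      rw [map_add, map_smul, smul_eq_mul, neg_sub] at this
      exact pos_of_mul_pos_right (by linarith : 0 < S * m (x - y)) hS0.le
    have hn0 : 0 < ‖y - x‖ := norm_pos_iff.2 hv
    have n1 : ‖y + S • -(y - x) - y‖ = S * ‖y - x‖ := by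
      rw [add_sub_cancel_left, norm_smul, norm_neg, Real.norm_of_nonneg hS0.le]
    have n2 : ‖x - (x + T • (y - x))‖ = T * ‖y - x‖ := by
      rw [sub_add_cancel_left, norm_neg, norm_smul, Real.norm_of_nonneg hT0.le]
    have n3 : ‖y + S • -(y - x) - x‖ = (S - 1) * ‖y - x‖ := by
      rw [show y + S • -(y - x) - x = -((S - 1) • (y - x)) by module, norm_neg, norm_smul,
        Real.norm_of_nonneg (by linarith)]
    have n4 : ‖y - (x + T • (y - x))‖ = (T - 1) * ‖y - x‖ := by
      rw [show y - (x + T • (y - x)) = -((T - 1) • (y - x)) by module, norm_neg, norm_smul,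
        Real.norm_of_nonneg (by linarith)]
    have e1 : l (x + T • (y - x)) - l y = (T - 1) * l (y - x) := by
      simp only [map_add, map_smul, map_sub, smul_eq_mul]; ring
    have e2 : l (x + T • (y - x)) - l x = T * l (y - x) := by
      simp only [map_add, map_smul, map_sub, smul_eq_mul]; ring
    have e3 : m (y + S • -(y - x)) - m y = S * m (x - y) := by
      simp only [map_add, map_smul, map_sub, map_neg, smul_eq_mul]; ring
    have e4 : m (y + S • -(y - x)) - m x = (S - 1) * m (x - y) := by
      simp only [map_add, map_smul, map_sub, map_neg, smul_eq_mul]; ring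
    have hS' : 0 < S - 1 := by linarith
    have hT' : 0 < T - 1 := by linarith
    rw [hd, n1, n2, n3, n4, crossPotential, crossPotential, e1, e2, e3, e4,
      Real.log_div (by positivity) (by positivity)]
    rw [Real.log_mul (by positivity) (by positivity), Real.log_mul (by positivity) (by positivity),
      Real.log_mul (by positivity) (by positivity), Real.log_mul (by positivity) (by positivity),
      Real.log_mul (by positivity) (by positivity), Real.log_mul (by positivity) (by positivity),
      Real.log_mul (by positivity) (by positivity), Real.log_mul (by positivity) (by positivity),
      Real.log_mul (by positivity) (by positivity), Real.log_mul (by positivity) (by positivity)]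
    ring
  have hint : ∀ η : ℝ → EuclideanSpace ℝ (Fin n), ContDiff ℝ 1 η →
      (∀ t ∈ Set.Icc (0 : ℝ) 1, η t ∈ D) →
      IntervalIntegrable (fun t => (gauge ((· - η t) '' D) (deriv η t) +
        gauge ((· - η t) '' D) (-(deriv η t))) / 2) MeasureTheory.volume 0 1 := by
    intro η hη hD
    have hc := hη.continuous_deriv le_rfl
    exact ((gauge_intervalIntegrable hconv hopen hη.continuous hc hD).add
      (gauge_intervalIntegrable hconv hopen hη.continuous hc.neg hD)).div_const 2
  have hder : ∀ η : ℝ → EuclideanSpace ℝ (Fin n), ContDiff ℝ 1 η →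
      (∀ t ∈ Set.Icc (0 : ℝ) 1, η t ∈ D) → ∀ t ∈ Set.Icc (0 : ℝ) 1,
      HasDerivAt (fun t => crossPotential l m (x + T • (y - x)) (y + S • -(y - x)) (η t))
        ((l (deriv η t) / (l (x + T • (y - x)) - l (η t)) +
          m (-(deriv η t)) / (m (y + S • -(y - x)) - m (η t))) / 2) t := by
    intro η hη hD t ht
    exact hasDerivAt_crossPotential ((hη.differentiable one_ne_zero) t).hasDerivAt
      (hl _ (hD t ht)) (hm _ (hD t ht))
  constructor
  -- The affine segment from `x` to `y` is a minimizer.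
  · have hη : ContDiff ℝ 1 fun t : ℝ => x + t • (y - x) := by fun_prop
    have hD : ∀ t ∈ Set.Icc (0 : ℝ) 1, x + t • (y - x) ∈ D := fun t ht =>
      hconv.add_smul_sub_mem hx hy ht
    have hdη : ∀ t : ℝ, deriv (fun t : ℝ => x + t • (y - x)) t = y - x := fun t => by
      simpa using (((hasDerivAt_id t).smul_const (y - x)).const_add x).deriv
    refine ⟨_, hη, hD, by simp, by simp, ?_⟩
    rw [intervalIntegral.integral_eq_sub_of_hasDerivAt
      (f := fun t => crossPotential l m (x + T • (y - x)) (y + S • -(y - x)) (x + t • (y - x)))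
      (fun t ht => ?_) (hint _ hη hD), hval]
    · simp
    · rw [Set.uIcc_of_le zero_le_one] at ht
      refine (hder _ hη hD t ht).congr_deriv ?_
      rw [hdη]
      have g1 := gauge_on_ray hconv hopen hx hT ht.1 (ht.2.trans_lt hT1) hl
      have g2 := gauge_on_ray hconv hopen hy hS (t := 1 - t) (by linarith [ht.2])
        (by linarith [ht.1]) hm
      -- Seen from `y`, the same segment is the ray in direction `-(y - x)` at time `1 - t`.
      have e : y + (1 - t) • -(y - x) = x + t • (y - x) := by module
      rw [e] at g2
      rw [g1, g2]
  · rintro L ⟨η, hη, hD, h0, h1, rfl⟩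
    have key := intervalIntegral.sub_le_integral_of_hasDeriv_right_of_le zero_le_one
      (fun t ht => (hder η hη hD t ht).continuousAt.continuousWithinAt)
      (fun t ht => (hder η hη hD t ⟨ht.1.le, ht.2.le⟩).hasDerivWithinAt)
      ((intervalIntegrable_iff_integrableOn_Icc_of_le zero_le_one).1 (hint η hη hD))
      (fun t ht => by
        have hp := hD t ⟨ht.1.le, ht.2.le⟩
        have := support_le_gauge hconv hopen (v := deriv η t) hp hl
        have := support_le_gauge hconv hopen (v := -(deriv η t)) hp hm
        linarith)
    rw [h0, h1, ← hval] at key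
    exact key
end

section
/- (Okada's Lemma.) Let D ⊆ ℝⁿ (n ≥ 1) be a nonempty bounded convex open set and define the Funk metric F : D × ℝⁿ → ℝ by F(x,v) := gauge (D − x) v. Let x ∈ D and v ∈ ℝⁿ with v ≠ 0, and assume the map (x',v') ↦ F(x',v') is Fréchet differentiable at (x,v). Then for every w ∈ ℝⁿ, the derivative of x' ↦ F(x',v) at x in the direction w equals F(x,v) times the derivative of v' ↦ F(x,v') at v in the direction w; i.e., ∂F/∂xⁱ(x,v) = F(x,v)·∂F/∂vⁱ(x,v) for every coordinate direction. -/
/-!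
Put `c = F(x,v)`, which is positive because `D` is bounded and `v ≠ 0`. The ray from `x` in
direction `v` leaves `D` at the boundary point `b = x + c⁻¹ v`. Moving the base point to
`x + t w` while keeping the exit point `b` fixed amounts to replacing `v` by
`c (b - x - t w) = v - t c w`, hence `F(x + t w, v - t c w) = c` for all small `t`.
Differentiating this constant function at `t = 0` gives `∂ₓF[w] - c ∂ᵥF[w] = 0`.
The geometric input is `gauge_sub_eq_one_iff`: the gauge of `D - x` equals `1` exactly at
`b - x` with `b` in the frontier of `D`.
-/

section Okada

variable {E : Type*} [NormedAddCommGroup E] [NormedSpace ℝ E]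

lemma image_sub_mem_nhds_zero {E : Type*} [NormedAddCommGroup E]
    {D : Set E} (hopen : IsOpen D) {x : E} (hx : x ∈ D) :
    (· - x) '' D ∈ nhds (0 : E) := by
  have h : IsOpen ((· - x) '' D) := (Homeomorph.subRight x).isOpenMap D hopen
  exact h.mem_nhds ⟨x, hx, sub_self x⟩

lemma convex_image_sub {D : Set E} (hconv : Convex ℝ D) (x : E) :
    Convex ℝ ((· - x) '' D) := by
  simpa [sub_eq_add_neg, add_comm] using hconv.translate (-x)

lemma gauge_sub_eq_one_iff {D : Set E} (hconv : Convex ℝ D) (hopen : IsOpen D)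
    {x : E} (hx : x ∈ D) (b : E) :
    gauge ((· - x) '' D) (b - x) = 1 ↔ b ∈ frontier D := by
  rw [gauge_eq_one_iff_mem_frontier (convex_image_sub hconv x)
    (image_sub_mem_nhds_zero hopen hx)]
  have h : frontier ((· - x) '' D) = (· - x) '' frontier D :=
    ((Homeomorph.subRight x).image_frontier D).symm
  rw [h]
  simp

/-- Moving the base point while keeping the exit point of the ray fixed does not change the
value of the Funk metric. -/
lemma gauge_sub_shift {D : Set E} (hconv : Convex ℝ D) (hopen : IsOpen D)
    {x y v : E} (hx : x ∈ D) (hy : y ∈ D) {c : ℝ} (hc : 0 < c)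
    (hcv : gauge ((· - x) '' D) v = c) :
    gauge ((· - y) '' D) (v - c • (y - x)) = c := by
  have hb : x + c⁻¹ • v ∈ frontier D := by
    rw [← gauge_sub_eq_one_iff hconv hopen hx, add_sub_cancel_left,
      gauge_smul_of_nonneg (inv_nonneg.2 hc.le), hcv, smul_eq_mul, inv_mul_cancel₀ hc.ne']
  have h1 := (gauge_sub_eq_one_iff hconv hopen hy _).2 hb
  have h2 : v - c • (y - x) = c • (x + c⁻¹ • v - y) := by
    rw [smul_sub, smul_sub, smul_add, smul_inv_smul₀ hc.ne']
    abel
  rw [h2, gauge_smul_of_nonneg hc.le, h1, smul_eq_mul, mul_one]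

end Okada

/-- **Okada's Lemma.** For the Funk metric `F(x,v) = gauge (D − x) v` of a
nonempty bounded convex open set `D`, if `F` is Fréchet differentiable at `(x,v)` with
`x ∈ D` and `v ≠ 0`, then for every direction `w`,
`∂F/∂x (x,v)[w] = F(x,v) · ∂F/∂v (x,v)[w]`. -/
theorem okada_lemma {n : ℕ} (hn : 1 ≤ n)
    (D : Set (EuclideanSpace ℝ (Fin n))) (hne : D.Nonempty)
    (hbdd : Bornology.IsBounded D) (hconv : Convex ℝ D) (hopen : IsOpen D)
    (F : EuclideanSpace ℝ (Fin n) → EuclideanSpace ℝ (Fin n) → ℝ)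
    (hF : ∀ x v, F x v = gauge ((· - x) '' D) v)
    (x : EuclideanSpace ℝ (Fin n)) (hx : x ∈ D)
    (v : EuclideanSpace ℝ (Fin n)) (hv : v ≠ 0)
    (hdiff : DifferentiableAt ℝ
      (fun p : EuclideanSpace ℝ (Fin n) × EuclideanSpace ℝ (Fin n) => F p.1 p.2) (x, v)) :
    ∀ w : EuclideanSpace ℝ (Fin n),
      fderiv ℝ (fun x' => F x' v) x w = F x v * fderiv ℝ (fun v' => F x v') v w := by
  intro w
  have hc : 0 < F x v := by
    rw [hF]
    refine (gauge_pos (absorbent_nhds_zero (image_sub_mem_nhds_zero hopen hx)) ?_).2 hv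
    rw [NormedSpace.isVonNBounded_iff]
    have h := hbdd.sub (Bornology.isBounded_singleton (x := x))
    rwa [Set.sub_singleton] at h
  set c := F x v with hcdef
  obtain ⟨L, hL⟩ := hdiff
  have hA : fderiv ℝ (fun x' => F x' v) x w = L (w, 0) := by
    have h : HasFDerivAt (fun x' => F x' v)
        (L.comp ((ContinuousLinearMap.id ℝ _).prod 0)) x :=
      HasFDerivAt.comp (g := fun p : _ × _ => F p.1 p.2) (f := fun x' => (x', v)) x hL
        ((hasFDerivAt_id x).prodMk (hasFDerivAt_const v x))
    rw [h.fderiv]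
    simp
  have hB : fderiv ℝ (fun v' => F x v') v w = L (0, w) := by
    have h : HasFDerivAt (fun v' => F x v')
        (L.comp ((0 : _ →L[ℝ] _).prod (ContinuousLinearMap.id ℝ _))) v :=
      HasFDerivAt.comp (g := fun p : _ × _ => F p.1 p.2) (f := fun v' => (x, v')) v hL
        ((hasFDerivAt_const x v).prodMk (hasFDerivAt_id v))
    rw [h.fderiv]
    simp
  -- The curve `t ↦ (x + t w, v - c t w)` keeps the exit point `x + c⁻¹ v` fixed.
  have hline : HasDerivAt (fun t : ℝ => (x + t • w, v - c • (t • w))) (w, -(c • w)) 0 := by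
    have h1 : HasDerivAt (fun t : ℝ => t • w) w 0 := by
      simpa using (hasDerivAt_id (0 : ℝ)).smul_const w
    exact (h1.const_add x).prodMk ((h1.const_smul c).const_sub v)
  have hcomp : HasDerivAt (fun t : ℝ => F (x + t • w) (v - c • (t • w)))
      (L (w, -(c • w))) 0 := by
    refine HasFDerivAt.comp_hasDerivAt (l := fun p : _ × _ => F p.1 p.2)
      (f := fun t : ℝ => (x + t • w, v - c • (t • w))) 0 ?_ hline
    simpa using hL
  have hconst : (fun t : ℝ => F (x + t • w) (v - c • (t • w))) =ᶠ[nhds 0] fun _ => c := by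
    have hcont : ContinuousAt (fun t : ℝ => x + t • w) 0 := by fun_prop
    have hmem : ∀ᶠ t : ℝ in nhds 0, x + t • w ∈ D :=
      hcont.eventually (hopen.mem_nhds (by simpa using hx))
    filter_upwards [hmem] with t ht
    have h := gauge_sub_shift hconv hopen hx ht hc (hF x v).symm
    rw [add_sub_cancel_left] at h
    rw [hF, h]
  have hzero : L (w, -(c • w)) = 0 :=
    hcomp.unique ((hasDerivAt_const (0 : ℝ) c).congr_of_eventuallyEq hconst)
  have hsplit : ((w, -(c • w)) : _ × _) = (w, 0) - c • (0, w) := by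
    ext <;> simp
  rw [hsplit, map_sub, map_smul, smul_eq_mul] at hzero
  rw [hA, hB]
  linarith
end

section
/- Let D ⊆ ℝⁿ (n ≥ 1) be a nonempty bounded convex open set. The Funk geometry is forward complete in the sense that forward metric balls are relatively compact in D: for every x ∈ D and every r ≥ 0, the set {y ∈ D : d_F(x,y) ≤ r} is a compact subset of ℝⁿ contained in D. -/
/-- The translate `D - x`. -/
def funkTranslate {n : ℕ} (D : Set (EuclideanSpace ℝ (Fin n))) (x : EuclideanSpace ℝ (Fin n)) :
    Set (EuclideanSpace ℝ (Fin n)) :=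
  (Homeomorph.addLeft x) ⁻¹' D

section

variable {n : ℕ} {D : Set (EuclideanSpace ℝ (Fin n))} {x : EuclideanSpace ℝ (Fin n)}

lemma mem_funkTranslate {v : EuclideanSpace ℝ (Fin n)} : v ∈ funkTranslate D x ↔ x + v ∈ D :=
  Iff.rfl

lemma funkTranslate_convex (hconv : Convex ℝ D) : Convex ℝ (funkTranslate D x) :=
  hconv.translate_preimage_right x

lemma funkTranslate_isOpen (hopen : IsOpen D) : IsOpen (funkTranslate D x) :=
  hopen.preimage (Homeomorph.addLeft x).continuous

lemma funkTranslate_mem_nhds (hopen : IsOpen D) (hx : x ∈ D) : funkTranslate D x ∈ nhds 0 :=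
  (funkTranslate_isOpen hopen).mem_nhds (by simpa [mem_funkTranslate] using hx)

lemma funkTranslate_isBounded (hbdd : Bornology.IsBounded D) :
    Bornology.IsBounded (funkTranslate D x) := by
  obtain ⟨R, hR⟩ := hbdd.exists_norm_le
  refine isBounded_iff_forall_norm_le.2 ⟨R + ‖x‖, fun v hv => ?_⟩
  have h1 := hR _ (mem_funkTranslate.1 hv)
  have h2 := norm_sub_le (x + v) x
  rw [add_sub_cancel_left] at h2
  linarith

lemma mem_iff_gauge_lt_one (hconv : Convex ℝ D) (hopen : IsOpen D) (hx : x ∈ D)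
    (y : EuclideanSpace ℝ (Fin n)) :
    y ∈ D ↔ gauge (funkTranslate D x) (y - x) < 1 := by
  have h := setOfPred_gauge_lt_one_eq_self_of_isOpen (funkTranslate_convex (x := x) hconv)
    (by simpa [mem_funkTranslate] using hx) (funkTranslate_isOpen hopen)
  have h2 := Set.ext_iff.1 h (y - x)
  rw [mem_funkTranslate, add_sub_cancel] at h2
  exact h2.symm

/-- The Funk distance in terms of the gauge of `D - x`: the exit time of the ray
`x + t • (y - x)` is the inverse of the gauge of `y - x`. -/
lemma funk_eq_neg_log_gauge (hbdd : Bornology.IsBounded D) (hconv : Convex ℝ D)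
    (hopen : IsOpen D) {dF : EuclideanSpace ℝ (Fin n) → EuclideanSpace ℝ (Fin n) → ℝ}
    (hdF : IsFunkDist D dF) (hx : x ∈ D) {y : EuclideanSpace ℝ (Fin n)} (hy : y ∈ D) :
    dF x y = -Real.log (1 - gauge (funkTranslate D x) (y - x)) := by
  rcases eq_or_ne x y with rfl | hxy
  · simp [hdF.1 x hx]
  have hnhds := funkTranslate_mem_nhds hopen hx
  have hg1 := (mem_iff_gauge_lt_one hconv hopen hx y).1 hy
  have hg0 : 0 < gauge (funkTranslate D x) (y - x) :=
    (gauge_pos (absorbent_nhds_zero hnhds)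
      (NormedSpace.isVonNBounded_of_isBounded ℝ (funkTranslate_isBounded hbdd))).2
      (sub_ne_zero.2 hxy.symm)
  set g := gauge (funkTranslate D x) (y - x) with hg
  have hfr : g⁻¹ • (y - x) ∈ frontier (funkTranslate D x) := by
    rw [← gauge_eq_one_iff_mem_frontier (funkTranslate_convex hconv) hnhds,
      gauge_smul_of_nonneg (inv_nonneg.2 hg0.le), ← hg, smul_eq_mul, inv_mul_cancel₀ hg0.ne']
  rw [funkTranslate, ← Homeomorph.preimage_frontier] at hfr
  rw [hdF.2 x hx y hy hxy (x + g⁻¹ • (y - x)) hfr g⁻¹ (inv_pos.2 hg0) rfl, ← Real.log_inv]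
  congr 1
  have hn : 0 < ‖y - x‖ := norm_pos_iff.2 (sub_ne_zero.2 hxy.symm)
  have e1 : x - (x + g⁻¹ • (y - x)) = (-g⁻¹) • (y - x) := by module
  have e2 : y - (x + g⁻¹ • (y - x)) = (1 - g⁻¹) • (y - x) := by module
  have h1 : 1 < g⁻¹ := (one_lt_inv₀ hg0).2 hg1
  rw [e1, e2, norm_smul, norm_smul, Real.norm_eq_abs, Real.norm_eq_abs, abs_neg,
    abs_of_pos (inv_pos.2 hg0), abs_of_neg (by linarith), mul_div_mul_right _ _ hn.ne']
  have h2 : 1 - g ≠ 0 := by linarith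
  have h3 : -(1 - g⁻¹) = (1 - g) * g⁻¹ := by field_simp; ring
  rw [h3]
  field_simp

end

/-- The Funk geometry is forward complete: every forward metric ball
`{y ∈ D : d_F(x,y) ≤ r}` is a compact subset of `ℝⁿ` contained in `D`. -/
theorem funk_forward_balls_compact {n : ℕ} (hn : 1 ≤ n)
    (D : Set (EuclideanSpace ℝ (Fin n))) (hne : D.Nonempty)
    (hbdd : Bornology.IsBounded D) (hconv : Convex ℝ D) (hopen : IsOpen D)
    (dF : EuclideanSpace ℝ (Fin n) → EuclideanSpace ℝ (Fin n) → ℝ)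
    (hdF : IsFunkDist D dF) :
    ∀ x ∈ D, ∀ r : ℝ, 0 ≤ r →
      IsCompact {y ∈ D | dF x y ≤ r} ∧ {y ∈ D | dF x y ≤ r} ⊆ D := by
  intro x hx r _
  refine ⟨?_, fun y hy => hy.1⟩
  have hset : {y ∈ D | dF x y ≤ r} =
      {y | gauge (funkTranslate D x) (y - x) ≤ 1 - Real.exp (-r)} := by
    ext y
    have hmem := mem_iff_gauge_lt_one hconv hopen hx y
    have hexp := Real.exp_pos (-r)
    constructor
    · rintro ⟨hy, hle⟩
      have hlt := hmem.1 hy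
      rw [funk_eq_neg_log_gauge hbdd hconv hopen hdF hx hy, neg_le,
        Real.le_log_iff_exp_le (by linarith)] at hle
      rw [Set.mem_ofPred_eq]
      linarith
    · intro hle
      rw [Set.mem_ofPred_eq] at hle
      have hy : y ∈ D := hmem.2 (by linarith)
      refine ⟨hy, ?_⟩
      rw [funk_eq_neg_log_gauge hbdd hconv hopen hdF hx hy, neg_le,
        Real.le_log_iff_exp_le (by linarith)]
      linarith
  refine Metric.isCompact_of_isClosed_isBounded ?_ (hbdd.subset fun y hy => hy.1)
  rw [hset]
  have hcont := continuous_gauge (funkTranslate_convex (x := x) hconv)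
    (funkTranslate_mem_nhds hopen hx)
  exact isClosed_le (hcont.comp (continuous_id.sub continuous_const)) continuous_const
end

section
/- Let D ⊆ ℝⁿ (n ≥ 1) be a nonempty bounded convex open set. The Hilbert geometry is complete in the sense that metric balls are relatively compact in D: for every x ∈ D and every r ≥ 0, the set {y ∈ D : d_H(x,y) ≤ r} is a compact subset of ℝⁿ contained in D. -/
/-- The Hilbert distance from `x`, expressed by the gauge of the translate `D - x`, which is written
as a preimage. -/
theorem IsHilbertDist.eq_gauge {n : ℕ} {D : Set (EuclideanSpace ℝ (Fin n))}
    (hbdd : Bornology.IsBounded D) (hconv : Convex ℝ D) (hopen : IsOpen D)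
    {dH : EuclideanSpace ℝ (Fin n) → EuclideanSpace ℝ (Fin n) → ℝ}
    (hdH : IsHilbertDist D dH) {x y : EuclideanSpace ℝ (Fin n)} (hx : x ∈ D) (hy : y ∈ D) :
    dH x y = (1 / 2) * Real.log ((1 + gauge ((fun v => x + v) ⁻¹' D) (x - y)) /
      (1 - gauge ((fun v => x + v) ⁻¹' D) (y - x))) := by
  by_cases hxy : x = y
  · subst hxy
    simp [hdH.1 x hx]
  set S : Set (EuclideanSpace ℝ (Fin n)) := (fun v => x + v) ⁻¹' D with hS
  have hSopen : IsOpen S := hopen.preimage (by fun_prop)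
  have hSconv : Convex ℝ S := hconv.translate_preimage_right x
  have hS0 : S ∈ nhds 0 := hSopen.mem_nhds (by simpa [hS] using hx)
  have hSbdd : Bornology.IsVonNBounded ℝ S :=
    (NormedSpace.isVonNBounded_iff ℝ).2
      ((isometry_add_left x).antilipschitz.isBounded_preimage hbdd)
  have hfront : ∀ v, gauge S v = 1 → x + v ∈ frontier D := fun v hv => by
    have h := (gauge_eq_one_iff_mem_frontier hSconv hS0).1 hv
    rwa [hS, show (fun v => x + v) ⁻¹' D = Homeomorph.addLeft x ⁻¹' D from rfl,
      ← Homeomorph.preimage_frontier] at h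
  have ha : 0 < gauge S (y - x) :=
    (gauge_pos (absorbent_nhds_zero hS0) hSbdd).2 (sub_ne_zero.2 (Ne.symm hxy))
  have hb : 0 < gauge S (x - y) :=
    (gauge_pos (absorbent_nhds_zero hS0) hSbdd).2 (sub_ne_zero.2 hxy)
  have ha1 : gauge S (y - x) < 1 := gauge_lt_one_of_mem_of_isOpen hSopen (by simpa [hS] using hy)
  set a := gauge S (y - x)
  set b := gauge S (x - y)
  have hv : 0 < ‖y - x‖ := norm_pos_iff.2 (sub_ne_zero.2 (Ne.symm hxy))
  have hy' : x + a⁻¹ • (y - x) ∈ frontier D := hfront _ (by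
    rw [gauge_smul_of_nonneg (inv_nonneg.2 ha.le)]
    exact inv_mul_cancel₀ ha.ne')
  have hx' : x + (-b⁻¹) • (y - x) ∈ frontier D := hfront _ (by
    rw [neg_smul, ← smul_neg, neg_sub, gauge_smul_of_nonneg (inv_nonneg.2 hb.le)]
    exact inv_mul_cancel₀ hb.ne')
  have ha2 : 1 < a⁻¹ := (one_lt_inv₀ ha).2 ha1
  have hb2 : 0 < b⁻¹ := inv_pos.2 hb
  rw [hdH.2 x hx y hy hxy _ hx' _ hy' (-b⁻¹) a⁻¹ (by linarith) ha2 rfl rfl]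
  have e1 : ‖x + (-b⁻¹) • (y - x) - y‖ = (1 + b⁻¹) * ‖y - x‖ := by
    rw [show x + (-b⁻¹) • (y - x) - y = (-(1 + b⁻¹)) • (y - x) by module, norm_smul, norm_neg,
      Real.norm_of_nonneg (by linarith)]
  have e2 : ‖x - (x + a⁻¹ • (y - x))‖ = a⁻¹ * ‖y - x‖ := by
    rw [show x - (x + a⁻¹ • (y - x)) = (-a⁻¹) • (y - x) by module, norm_smul, norm_neg,
      Real.norm_of_nonneg (by linarith)]
  have e3 : ‖x + (-b⁻¹) • (y - x) - x‖ = b⁻¹ * ‖y - x‖ := by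
    rw [show x + (-b⁻¹) • (y - x) - x = (-b⁻¹) • (y - x) by module, norm_smul, norm_neg,
      Real.norm_of_nonneg (by linarith)]
  have e4 : ‖y - (x + a⁻¹ • (y - x))‖ = (a⁻¹ - 1) * ‖y - x‖ := by
    rw [show y - (x + a⁻¹ • (y - x)) = (-(a⁻¹ - 1)) • (y - x) by module, norm_smul, norm_neg,
      Real.norm_of_nonneg (by linarith)]
  rw [e1, e2, e3, e4]
  congr 2
  have h1 : 1 - a ≠ 0 := by linarith
  have h2 : a⁻¹ - 1 = (1 - a) / a := by field_simp
  rw [h2]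
  field_simp
  ring

/-- The Hilbert geometry is complete: every metric ball
`{y ∈ D : d_H(x,y) ≤ r}` is a compact subset of `ℝⁿ` contained in `D`. -/
theorem hilbert_balls_compact {n : ℕ} (hn : 1 ≤ n)
    (D : Set (EuclideanSpace ℝ (Fin n))) (hne : D.Nonempty)
    (hbdd : Bornology.IsBounded D) (hconv : Convex ℝ D) (hopen : IsOpen D)
    (dH : EuclideanSpace ℝ (Fin n) → EuclideanSpace ℝ (Fin n) → ℝ)
    (hdH : IsHilbertDist D dH) :
    ∀ x ∈ D, ∀ r : ℝ, 0 ≤ r →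
      IsCompact {y ∈ D | dH x y ≤ r} ∧ {y ∈ D | dH x y ≤ r} ⊆ D := by
  intro x hx r _
  refine ⟨?_, fun y hy => hy.1⟩
  refine Metric.isCompact_of_isClosed_isBounded ?_ (hbdd.subset fun y hy => hy.1)
  set S : Set (EuclideanSpace ℝ (Fin n)) := (fun v => x + v) ⁻¹' D with hS
  have hSopen : IsOpen S := hopen.preimage (by fun_prop)
  have hSconv : Convex ℝ S := hconv.translate_preimage_right x
  have h0 : (0 : EuclideanSpace ℝ (Fin n)) ∈ S := by simpa [hS] using hx
  have hcont : Continuous (gauge S) := continuous_gauge hSconv (hSopen.mem_nhds h0)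
  have hmem : ∀ y, y ∈ D ↔ gauge S (y - x) < 1 := fun y => by
    have h := Set.ext_iff.1 (setOfPred_gauge_lt_one_eq_self_of_isOpen hSconv h0 hSopen) (y - x)
    rw [Set.mem_ofPred_eq] at h
    rw [h]
    simp [hS]
  have hset : {y ∈ D | dH x y ≤ r} =
      {y | 1 + gauge S (x - y) ≤ Real.exp (2 * r) * (1 - gauge S (y - x))} := by
    ext y
    have hb : 0 ≤ gauge S (x - y) := gauge_nonneg _
    have key : y ∈ D → (dH x y ≤ r ↔
        1 + gauge S (x - y) ≤ Real.exp (2 * r) * (1 - gauge S (y - x))) := fun hy => by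
      have ha : 0 < 1 - gauge S (y - x) := sub_pos.2 ((hmem y).1 hy)
      rw [hdH.eq_gauge hbdd hconv hopen hx hy, ← div_le_iff₀ ha,
        ← Real.log_le_iff_le_exp (by positivity)]
      constructor <;> intro h <;> linarith
    refine ⟨fun h => (key h.1).1 h.2, fun h => ?_⟩
    rw [Set.mem_ofPred_eq] at h
    -- The left side is positive, so the factor `1 - gauge S (y - x)` must be positive.
    have hy : y ∈ D := (hmem y).2 <| sub_pos.1 <|
      pos_of_mul_pos_right (lt_of_lt_of_le (by positivity) h) (Real.exp_pos _).le
    exact ⟨hy, (key hy).2 h⟩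
  rw [hset]
  exact isClosed_le (by fun_prop) (by fun_prop)
end

section
/- (Hessian of the Funk metric in graph coordinates.) Let n ≥ 2, write ℝⁿ = ℝ^{n−1} × ℝ, and let D ⊆ ℝⁿ be a nonempty bounded convex open set. Let U ⊆ ℝ^{n−1} be open and h : U → ℝ be twice continuously differentiable such that for every z ∈ U the point (z, h(z)) lies in the frontier of D, and t < h(z) whenever (z,t) ∈ D. Define F(x,v) := gauge (D − x) v and φ(z,t) := h(z) − t. Fix (z₀,t₀) ∈ D with z₀ ∈ U, let eₙ := (0,1) ∈ ℝ^{n−1} × ℝ, and assume F is twice continuously differentiable on a neighborhood of ((z₀,t₀), eₙ) in ℝⁿ × ℝⁿ. Then for all coordinate indices i, j ∈ {1,…,n}: (1/2)·∂²(F²)/∂vⁱ∂vʲ((z₀,t₀), eₙ) = −∂ᵢ∂ⱼφ(z₀,t₀)/φ(z₀,t₀) + ∂ᵢφ(z₀,t₀)·∂ⱼφ(z₀,t₀)/φ(z₀,t₀)², where ∂ᵢ denotes the partial derivative in the i-th coordinate of ℝⁿ. -/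
/-!
Write `e = (0, 1)`, `x₀ = (z₀, t₀)`, `f = F x₀` and `φ₀ = φ x₀ > 0`. For `v` near `e` the ray from
`x₀` in direction `v` leaves `D` at `x₀ + v / f v`, and this point lies on the graph of `h`
(`mem_graph_of_mem_frontier`), so `φ (x₀ + v / f v) = 0` on a neighbourhood of `e`.

Differentiating this implicit equation once gives `f v * dφ(P v) u = df(v) u * dφ(P v) v` with
`P v = x₀ + v / f v`. Since `φ (p + c e) = φ p - c`, the differential `dφ` is invariant under
translation along `e`, `dφ e = -1`, and `d²φ` vanishes when an argument is `e`. At `v = e` the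
identity reads `df b = -f dφ b`; differentiating it once more at `e`, the products of first
derivatives cancel and `d²f (a, b) = -d²φ (a, b)` remains. With `f e = 1 / φ₀`, the formula follows
from `d²(f²/2) (a, b) = f d²f (a, b) + df a * df b`. This calculus part is
`hessian_of_implicit_radial`, valid in any real normed space.
-/

/-- The `i`-th standard coordinate vector of `ℝⁿ = ℝ^{n−1} × ℝ`; for `i = n` (the last
index) this is `eₙ = (0, 1)`. -/
noncomputable def coordVec (n : ℕ) (i : Fin n) : EuclideanSpace ℝ (Fin (n - 1)) × ℝ :=
  if h : (i : ℕ) < n - 1 then (EuclideanSpace.single (⟨(i : ℕ), h⟩ : Fin (n - 1)) 1, 0)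
  else (0, 1)

open Filter Topology

/-- The Hessian of `f² / 2` at `e`, when `f` is determined near `e` by
`φ (x₀ + v / f v) = 0` and `φ` is affine with slope `-1` along `e`. -/
lemma hessian_of_implicit_radial {E : Type*} [NormedAddCommGroup E] [NormedSpace ℝ E]
    (φ f : E → ℝ) (x₀ e : E) (htr : ∀ (p : E) (c : ℝ), φ (p + c • e) = φ p - c)
    (hpos : 0 < φ x₀) (hφ : ContDiffAt ℝ 2 φ x₀) (hf : ContDiffAt ℝ 2 f e)
    (hfe : f e = (φ x₀)⁻¹) (himp : ∀ᶠ v in 𝓝 e, φ (x₀ + (f v)⁻¹ • v) = 0) (a b : E) :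
    (1 / 2) * fderiv ℝ (fun v => fderiv ℝ (fun v' => (f v') ^ 2) v b) e a
      = -(fderiv ℝ (fun p => fderiv ℝ φ p b) x₀ a) / φ x₀
        + (fderiv ℝ φ x₀ a) * (fderiv ℝ φ x₀ b) / (φ x₀) ^ 2 := by
  have hfe0 : f e ≠ 0 := by rw [hfe]; positivity
  -- `fderiv φ` is invariant under translation along `e`
  have hinv : ∀ (c : ℝ) (p : E), fderiv ℝ φ (p + c • e) = fderiv ℝ φ p := by
    intro c p
    rw [← fderiv_comp_add_right]
    simp only [htr, fderiv_sub_const]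
  have hP0 : x₀ + (f e)⁻¹ • e = x₀ + φ x₀ • e := by rw [hfe, inv_inv]
  have hφ1 : ContDiffAt ℝ 2 φ (x₀ + φ x₀ • e) := by
    have h1 : φ = fun p => φ (p + (-φ x₀) • e) - φ x₀ := by
      funext p; rw [htr]; ring
    have h2 : ContDiffAt ℝ 2 (fun p => φ (p + (-φ x₀) • e) - φ x₀) (x₀ + φ x₀ • e) := by
      refine ContDiffAt.sub (ContDiffAt.comp (g := φ) _ ?_ (by fun_prop)) contDiffAt_const
      rw [neg_smul]; simpa using hφ
    rwa [← h1] at h2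
  have hφd : ∀ᶠ p in 𝓝 (x₀ + φ x₀ • e), DifferentiableAt ℝ φ p :=
    (hφ1.eventually (by simp)).mono fun p hp => hp.differentiableAt (by simp)
  have hfd : ∀ᶠ v in 𝓝 e, DifferentiableAt ℝ f v :=
    (hf.eventually (by simp)).mono fun p hp => hp.differentiableAt (by simp)
  have hde : ∀ p, DifferentiableAt ℝ φ p → fderiv ℝ φ p e = -1 := by
    intro p hp
    rw [← hp.lineDeriv_eq_fderiv]
    simp only [lineDeriv, htr]
    simp
  have hdφ : HasFDerivAt (fderiv ℝ φ) (fderiv ℝ (fderiv ℝ φ) x₀) (x₀ + φ x₀ • e) := by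
    have h1 : DifferentiableAt ℝ (fderiv ℝ φ) (x₀ + φ x₀ • e) :=
      (hφ1.fderiv_right (m := 1) (by norm_num)).differentiableAt (by simp)
    have h2 : fderiv ℝ (fderiv ℝ φ) x₀ = fderiv ℝ (fderiv ℝ φ) (x₀ + φ x₀ • e) := by
      rw [← fderiv_comp_add_right]
      simp only [hinv]
    rw [h2]; exact h1.hasFDerivAt
  have hdf : HasFDerivAt (fderiv ℝ f) (fderiv ℝ (fderiv ℝ f) e) e :=
    ((hf.fderiv_right (m := 1) (by norm_num)).differentiableAt (by simp)).hasFDerivAt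
  have hf0 : HasFDerivAt f (fderiv ℝ f e) e := hfd.self_of_nhds.hasFDerivAt
  have hdP : ∀ v, DifferentiableAt ℝ f v → f v ≠ 0 →
      HasFDerivAt (fun v => x₀ + (f v)⁻¹ • v)
        ((f v)⁻¹ • ContinuousLinearMap.id ℝ E
          + (-((f v) ^ 2)⁻¹ • fderiv ℝ f v).smulRight v) v := by
    intro v hv hv0
    have h1 := (hasDerivAt_inv hv0).comp_hasFDerivAt v hv.hasFDerivAt
    exact (h1.smul (hasFDerivAt_id v)).const_add x₀
  have hP := hdP e hfd.self_of_nhds hfe0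
  have hPc := hP.continuousAt
  rw [ContinuousAt, hP0] at hPc
  -- the implicit equation differentiated once
  have hfirst : ∀ u, (fun v => f v * fderiv ℝ φ (x₀ + (f v)⁻¹ • v) u) =ᶠ[𝓝 e]
      fun v => fderiv ℝ f v u * fderiv ℝ φ (x₀ + (f v)⁻¹ • v) v := by
    intro u
    filter_upwards [hfd, hPc.eventually hφd, himp.eventually_nhds,
      hf.continuousAt.eventually_ne hfe0] with v h1 h2 h3 h4
    have h5 := h2.hasFDerivAt.comp v (hdP v h1 h4)
    have h6 : φ ∘ (fun v => x₀ + (f v)⁻¹ • v) =ᶠ[𝓝 v] fun _ => (0 : ℝ) := h3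
    have h7 := (h5.congr_of_eventuallyEq h6.symm).unique (hasFDerivAt_const (0 : ℝ) v)
    have h8 := DFunLike.congr_fun h7 u
    simp at h8
    rw [← sub_eq_add_neg, sub_eq_zero] at h8
    generalize fderiv ℝ φ (x₀ + (f v)⁻¹ • v) = L at h8 ⊢
    field_simp at h8
    exact h8
  have hdiff0 : DifferentiableAt ℝ φ (x₀ + φ x₀ • e) := hφd.self_of_nhds
  have hB : HasFDerivAt (fun v => fderiv ℝ φ (x₀ + (f v)⁻¹ • v)) _ e :=
    HasFDerivAt.comp (g := fderiv ℝ φ) e (by rw [hP0]; exact hdφ) hP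
  -- `d²φ` vanishes when either argument is `e`
  have hBe1 : fderiv ℝ (fderiv ℝ φ) x₀ e = 0 := by
    have h1 : HasFDerivAt (fderiv ℝ φ) (fderiv ℝ (fderiv ℝ φ) x₀) x₀ :=
      ((hφ.fderiv_right (m := 1) (by norm_num)).differentiableAt (by simp)).hasFDerivAt
    rw [← h1.differentiableAt.lineDeriv_eq_fderiv]
    simp only [lineDeriv, hinv]
    simp
  have hBe2 : ∀ u, fderiv ℝ (fderiv ℝ φ) x₀ u e = 0 := by
    intro u
    have h1 := hdφ.clm_apply (hasFDerivAt_const e _)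
    have h2 : (fun p => fderiv ℝ φ p e) =ᶠ[𝓝 (x₀ + φ x₀ • e)] fun _ => (-1 : ℝ) :=
      hφd.mono hde
    have h3 := (h1.congr_of_eventuallyEq h2.symm).unique (hasFDerivAt_const (-1 : ℝ) _)
    simpa using DFunLike.congr_fun h3 u
  have hgrad : ∀ u, fderiv ℝ f e u = -(f e * fderiv ℝ φ x₀ u) := by
    intro u
    have h1 := (hfirst u).self_of_nhds
    simp only [hP0, hde _ hdiff0] at h1
    rw [hinv] at h1
    linarith
  -- the implicit equation differentiated twice
  have hsecond : fderiv ℝ (fderiv ℝ f) e a b = -fderiv ℝ (fderiv ℝ φ) x₀ a b := by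
    have hL := hf0.mul (hB.clm_apply (hasFDerivAt_const b e))
    have hR := (hdf.clm_apply (hasFDerivAt_const b e)).mul (hB.clm_apply (hasFDerivAt_id e))
    have h1 := DFunLike.congr_fun (hL.unique (hR.congr_of_eventuallyEq (hfirst b))) a
    simp [hBe1, hBe2, hinv] at h1
    have h2 : fderiv ℝ φ x₀ e = -1 := by rw [← hinv (φ x₀) x₀, hde _ hdiff0]
    rw [h2, hgrad, hgrad, mul_inv_cancel_left₀ hfe0] at h1
    linarith
  have hlhs : fderiv ℝ (fun v => fderiv ℝ (fun v' => (f v') ^ 2) v b) e a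
      = 2 * (f e * fderiv ℝ (fderiv ℝ f) e a b + fderiv ℝ f e a * fderiv ℝ f e b) := by
    have h1 : (fun v => fderiv ℝ (fun v' => (f v') ^ 2) v b) =ᶠ[𝓝 e]
        fun v => 2 * (f v * fderiv ℝ f v b) := by
      filter_upwards [hfd] with v hv
      rw [(hv.hasFDerivAt.pow 2).fderiv]
      simp
      ring
    have h2 : HasFDerivAt (fun v => 2 * (f v * fderiv ℝ f v b)) _ e :=
      (hf0.mul (hdf.clm_apply (hasFDerivAt_const b e))).const_mul 2
    rw [h1.fderiv_eq, h2.fderiv]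
    simp
    ring
  have hrhs : fderiv ℝ (fun p => fderiv ℝ φ p b) x₀ a = fderiv ℝ (fderiv ℝ φ) x₀ a b := by
    have h1 : DifferentiableAt ℝ (fderiv ℝ φ) x₀ :=
      (hφ.fderiv_right (m := 1) (by norm_num)).differentiableAt (by simp)
    rw [(h1.hasFDerivAt.clm_apply (hasFDerivAt_const b x₀)).fderiv]
    simp
  rw [hlhs, hrhs, hsecond, hgrad, hgrad, hfe]
  field_simp

/-- A boundary point `(z, t)` strictly above a point `(z, s)` of the open convex set `D`, with
`z ∈ U`, lies on the graph of `h`: if it were below `(z, h z)`, it would be interior to the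
vertical segment from `(z, s) ∈ D` to `(z, h z) ∈ closure D`, hence in `D`; it cannot be above,
since `h` is continuous and `D` lies below its graph. -/
lemma mem_graph_of_mem_frontier {V : Type*} [NormedAddCommGroup V] [NormedSpace ℝ V]
    {D : Set (V × ℝ)} (hconv : Convex ℝ D) (hopen : IsOpen D) {U : Set V} (hU : IsOpen U)
    {h : V → ℝ} (hh : ContinuousOn h U) (hgraph : ∀ z ∈ U, (z, h z) ∈ frontier D)
    (hbelow : ∀ z ∈ U, ∀ t : ℝ, (z, t) ∈ D → t < h z) {z : V} {s t : ℝ} (hz : z ∈ U)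
    (hs : (z, s) ∈ D) (hst : s < t) (ht : (z, t) ∈ frontier D) : t = h z := by
  apply le_antisymm
  · by_contra! hlt
    have hc : ContinuousAt (fun p : V × ℝ => h p.1) (z, t) :=
      ContinuousAt.comp (g := h) (hh.continuousAt (hU.mem_nhds hz)) continuousAt_fst
    have h1 : ∀ᶠ p : V × ℝ in 𝓝 (z, t), h p.1 < p.2 ∧ p.1 ∈ U :=
      (hc.eventually_lt continuousAt_snd hlt).and
        (continuousAt_fst.eventually_mem (hU.mem_nhds hz))
    obtain ⟨p, hp, hpD⟩ := mem_closure_iff_nhds.1 ht.1 _ h1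
    exact absurd (hbelow p.1 hp.2 p.2 hpD) hp.1.not_gt
  · by_contra! hlt
    have h1 : (z, t) ∈ openSegment ℝ (z, s) (z, h z) := by
      refine ⟨(h z - t) / (h z - s), (t - s) / (h z - s), div_pos (by linarith) (by linarith),
        div_pos (by linarith) (by linarith), ?_, ?_⟩
      · have : h z - s ≠ 0 := by linarith
        field_simp
        ring
      · have : h z - s ≠ 0 := by linarith
        ext
        · simp only [Prod.smul_mk, Prod.mk_add_mk, ← add_smul]
          rw [show (h z - t) / (h z - s) + (t - s) / (h z - s) = 1 by field_simp; ring, one_smul]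
        · simp
          field_simp
          ring
    have h2 := hconv.openSegment_interior_closure_subset_interior
      (by rwa [hopen.interior_eq]) (hgraph z hz).1 h1
    exact ht.2 h2

/-- **Hessian of the Funk metric in graph coordinates.**
With the upper part of `∂D` given as the graph of `h` and `φ(z,t) = h(z) − t`, the
Hessian in the velocity variable of `F²/2` at `((z₀,t₀), eₙ)` equals
`−∂ᵢ∂ⱼφ/φ + ∂ᵢφ ∂ⱼφ/φ²` at `(z₀,t₀)`. -/
theorem funk_hessian_graph_coords {n : ℕ} (hn : 2 ≤ n)
    (D : Set (EuclideanSpace ℝ (Fin (n - 1)) × ℝ)) (hne : D.Nonempty)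
    (hbdd : Bornology.IsBounded D) (hconv : Convex ℝ D) (hopen : IsOpen D)
    (U : Set (EuclideanSpace ℝ (Fin (n - 1)))) (hU : IsOpen U)
    (h : EuclideanSpace ℝ (Fin (n - 1)) → ℝ) (hh : ContDiffOn ℝ 2 h U)
    (hgraph : ∀ z ∈ U, ((z, h z) : EuclideanSpace ℝ (Fin (n - 1)) × ℝ) ∈ frontier D)
    (hbelow : ∀ z ∈ U, ∀ t : ℝ, ((z, t) : EuclideanSpace ℝ (Fin (n - 1)) × ℝ) ∈ D → t < h z)
    (F : (EuclideanSpace ℝ (Fin (n - 1)) × ℝ) → (EuclideanSpace ℝ (Fin (n - 1)) × ℝ) → ℝ)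
    (hF : ∀ x v, F x v = gauge ((· - x) '' D) v)
    (φ : (EuclideanSpace ℝ (Fin (n - 1)) × ℝ) → ℝ)
    (hφ : ∀ p, φ p = h p.1 - p.2)
    (z₀ : EuclideanSpace ℝ (Fin (n - 1))) (t₀ : ℝ) (hz₀ : z₀ ∈ U)
    (hx₀ : ((z₀, t₀) : EuclideanSpace ℝ (Fin (n - 1)) × ℝ) ∈ D)
    (hsmooth : ContDiffAt ℝ 2
      (fun p : (EuclideanSpace ℝ (Fin (n - 1)) × ℝ) × (EuclideanSpace ℝ (Fin (n - 1)) × ℝ) =>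
        F p.1 p.2)
      ((z₀, t₀), ((0 : EuclideanSpace ℝ (Fin (n - 1))), (1 : ℝ)))) :
    ∀ i j : Fin n,
      (1 / 2) * fderiv ℝ
          (fun v => fderiv ℝ (fun v' => (F (z₀, t₀) v') ^ 2) v (coordVec n j))
          ((0 : EuclideanSpace ℝ (Fin (n - 1))), (1 : ℝ)) (coordVec n i)
        = -(fderiv ℝ (fun p => fderiv ℝ φ p (coordVec n j)) (z₀, t₀) (coordVec n i))
              / φ (z₀, t₀)
          + (fderiv ℝ φ (z₀, t₀) (coordVec n i)) * (fderiv ℝ φ (z₀, t₀) (coordVec n j))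
              / (φ (z₀, t₀)) ^ 2 := by
  intro i j
  have hh0 : ContDiffAt ℝ 2 h z₀ := hh.contDiffAt (hU.mem_nhds hz₀)
  have hpos : 0 < φ (z₀, t₀) := by rw [hφ]; exact sub_pos.2 (hbelow z₀ hz₀ t₀ hx₀)
  have hφC : ContDiffAt ℝ 2 φ (z₀, t₀) := by
    rw [show φ = fun p => h p.1 - p.2 from funext hφ]
    exact (ContDiffAt.comp (g := h) _ hh0 contDiffAt_fst).sub contDiffAt_snd
  have hfC : ContDiffAt ℝ 2 (F (z₀, t₀)) (0, 1) :=
    ContDiffAt.comp (g := fun p : (EuclideanSpace ℝ (Fin (n - 1)) × ℝ) ×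
      (EuclideanSpace ℝ (Fin (n - 1)) × ℝ) => F p.1 p.2)
      (f := fun v => ((z₀, t₀), v)) _ hsmooth (by fun_prop)
  -- gauge facts for the translated domain
  have hSconv : Convex ℝ ((· - (z₀, t₀)) '' D) := by
    simpa [sub_eq_add_neg, add_comm] using hconv.translate (-(z₀, t₀))
  have hSopen : IsOpen ((· - (z₀, t₀)) '' D) :=
    (Homeomorph.subRight (z₀, t₀)).isOpenMap _ hopen
  have hS0 : (· - (z₀, t₀)) '' D ∈ 𝓝 0 := hSopen.mem_nhds ⟨_, hx₀, sub_self _⟩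
  have hone : ∀ v, F (z₀, t₀) v = 1 ↔ (z₀, t₀) + v ∈ frontier D := by
    intro v
    rw [hF, gauge_eq_one_iff_mem_frontier hSconv hS0]
    have := (Homeomorph.subRight (z₀, t₀)).image_frontier D
    simp only [Homeomorph.coe_subRight] at this
    rw [← this]
    constructor
    · rintro ⟨y, hy, rfl⟩
      simpa using hy
    · intro hv
      exact ⟨_, hv, by simp⟩
  have hhom : ∀ c : ℝ, 0 ≤ c → ∀ v, F (z₀, t₀) (c • v) = c * F (z₀, t₀) v := by
    intro c hc v
    rw [hF, hF, gauge_smul_of_nonneg hc, smul_eq_mul]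
  have hfe : F (z₀, t₀) (0, 1) = (φ (z₀, t₀))⁻¹ := by
    have h1 : F (z₀, t₀) (φ (z₀, t₀) • (0, 1)) = 1 := by
      rw [hone]
      have := hgraph z₀ hz₀
      rw [hφ]
      simpa using this
    rw [hhom _ hpos.le] at h1
    exact eq_inv_of_mul_eq_one_right h1
  have hfe0 : 0 < F (z₀, t₀) (0, 1) := by rw [hfe]; positivity
  have himp : ∀ᶠ v in 𝓝 ((0 : EuclideanSpace ℝ (Fin (n - 1))), (1 : ℝ)),
      φ ((z₀, t₀) + (F (z₀, t₀) v)⁻¹ • v) = 0 := by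
    have hPc : ContinuousAt (fun v => (z₀, t₀) + (F (z₀, t₀) v)⁻¹ • v)
        ((0 : EuclideanSpace ℝ (Fin (n - 1))), (1 : ℝ)) :=
      continuousAt_const.add ((hfC.continuousAt.inv₀ hfe0.ne').smul continuousAt_id)
    have hP0 : (z₀, t₀) + (F (z₀, t₀) (0, 1))⁻¹ • ((0 : EuclideanSpace ℝ (Fin (n - 1))), (1 : ℝ))
        = (z₀, h z₀) := by
      rw [hfe, inv_inv, hφ]; simp
    rw [ContinuousAt, hP0] at hPc
    -- near `(z₀, h z₀)`, points lie over `U`, strictly above points of `D` at height `t₀`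
    have hnear : ∀ᶠ p : EuclideanSpace ℝ (Fin (n - 1)) × ℝ in 𝓝 (z₀, h z₀),
        p.1 ∈ U ∧ (p.1, t₀) ∈ D ∧ t₀ < p.2 := by
      refine (continuousAt_fst.eventually_mem (hU.mem_nhds hz₀)).and (Eventually.and ?_ ?_)
      · have : ContinuousAt (fun p : EuclideanSpace ℝ (Fin (n - 1)) × ℝ => (p.1, t₀))
            (z₀, h z₀) := by fun_prop
        exact this.eventually_mem (hopen.mem_nhds hx₀)
      · exact continuousAt_snd.eventually_const_lt (hbelow z₀ hz₀ t₀ hx₀)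
    filter_upwards [hPc.eventually hnear, hfC.continuousAt.eventually_const_lt hfe0]
      with v hv hvpos
    have hfr : (z₀, t₀) + (F (z₀, t₀) v)⁻¹ • v ∈ frontier D := by
      rw [← hone, hhom _ (inv_nonneg.2 hvpos.le), inv_mul_cancel₀ hvpos.ne']
    rw [hφ, sub_eq_zero]
    exact (mem_graph_of_mem_frontier hconv hopen hU hh.continuousOn hgraph hbelow hv.1 hv.2.1
      hv.2.2 hfr).symm
  exact hessian_of_implicit_radial φ (F (z₀, t₀)) (z₀, t₀) (0, 1)
    (fun p c => by simp [hφ]; ring) hpos hφC hfC hfe himp _ _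
end

section
/- (Key computation for the weighted Ricci curvature of the Funk metric.) Let n ≥ 2, write ℝⁿ = ℝ^{n−1} × ℝ, and let D ⊆ ℝⁿ be a nonempty bounded convex open set. Let U ⊆ ℝ^{n−1} be open and h : U → ℝ be twice continuously differentiable such that for every z ∈ U the point (z, h(z)) lies in the frontier of D, and t < h(z) whenever (z,t) ∈ D. Define F(x,v) := gauge (D − x) v and eₙ := (0,1). Fix z₀ ∈ U with (z₀,0) ∈ D and assume the Fréchet derivative of h at z₀ vanishes. Let I := {t ∈ ℝ : (z₀,t) ∈ D}, assume F is three times continuously differentiable on a neighborhood of {((z₀,t), eₙ) : t ∈ I} in ℝⁿ × ℝⁿ, and for t ∈ I let G(t) be the n×n matrix with entries G(t)ᵢⱼ := (1/2)·∂²(F²)/∂vⁱ∂vʲ((z₀,t), eₙ); assume G(t) is positive definite for every t ∈ I. Then the function Ψ(t) := (1/2)·log(det G(t)) is differentiable on I with Ψ'(t) = (n+1)/(2·(h(z₀) − t)) for every t ∈ I. -/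
open Topology Filter

/-- A vertical ray starting inside a convex open set meets its frontier at most once: a closer
frontier point would lie on an open segment from an interior point to a closure point. -/
lemma frontier_unique {W : Type*} [NormedAddCommGroup W] [NormedSpace ℝ W] {D : Set (W × ℝ)}
    (hconv : Convex ℝ D) (hopen : IsOpen D) {z : W} {t a b : ℝ} (ht : (z, t) ∈ D)
    (ha : (z, a) ∈ frontier D) (hb : (z, b) ∈ frontier D) (hta : t < a) (htb : t < b) :
    a = b := by
  have key : ∀ a b : ℝ, (z, a) ∈ frontier D → (z, b) ∈ frontier D → t < a → ¬ a < b := by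
    intro a b ha hb hta hab
    have h1 := hconv.openSegment_interior_closure_subset_interior
      (x := (z, t)) (y := (z, b)) (by rwa [hopen.interior_eq]) hb.1
    refine ha.2 (h1 ⟨(b - a) / (b - t), (a - t) / (b - t), ?_, ?_, ?_, ?_⟩)
    · exact div_pos (by linarith) (by linarith)
    · exact div_pos (by linarith) (by linarith)
    · have : b - t ≠ 0 := by linarith
      field_simp; ring
    · have : b - t ≠ 0 := by linarith
      ext1
      · simp only [Prod.smul_mk, Prod.mk_add_mk, ← add_smul]
        rw [show (b - a) / (b - t) + (a - t) / (b - t) = 1 by field_simp; ring, one_smul]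
      · simp only [Prod.smul_mk, Prod.mk_add_mk, smul_eq_mul]
        field_simp; ring
  exact le_antisymm (not_lt.1 (key b a hb ha htb)) (not_lt.1 (key a b ha hb hta))

/-- The point at gauge distance one from `x` in the direction `v` is the exit point of the ray. -/
lemma gauge_boundary {E : Type*} [NormedAddCommGroup E] [NormedSpace ℝ E] {D : Set E}
    (hconv : Convex ℝ D) (hopen : IsOpen D) {x v : E} (hx : x ∈ D)
    (hr : 0 < gauge ((· - x) '' D) v) :
    x + (gauge ((· - x) '' D) v)⁻¹ • v ∈ frontier D := by
  set A := (· - x) '' D with hA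
  have himg : A = Homeomorph.subRight x '' D := rfl
  have hAc : Convex ℝ A := by
    have := hconv.translate (-x)
    convert this using 1
    ext y; simp [hA, sub_eq_add_neg, add_comm]
  have hA0 : A ∈ 𝓝 (0 : E) := by
    rw [himg]
    exact ((Homeomorph.subRight x).isOpenMap D hopen).mem_nhds ⟨x, hx, by simp⟩
  have h1 : gauge A ((gauge A v)⁻¹ • v) = 1 := by
    rw [gauge_smul_of_nonneg (by positivity), smul_eq_mul, inv_mul_cancel₀ hr.ne']
  rw [gauge_eq_one_iff_mem_frontier hAc hA0, himg, ← Homeomorph.image_frontier] at h1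
  obtain ⟨y, hy, hyx⟩ := h1
  rw [← himg] at hyx
  rw [← hyx]
  simpa using hy

lemma gauge_translate_pos {E : Type*} [NormedAddCommGroup E] [NormedSpace ℝ E] {D : Set E}
    (hbdd : Bornology.IsBounded D) (hopen : IsOpen D) {x v : E} (hx : x ∈ D) (hv : v ≠ 0) :
    0 < gauge ((· - x) '' D) v := by
  have hA0 : (· - x) '' D ∈ 𝓝 (0 : E) :=
    ((Homeomorph.subRight x).isOpenMap D hopen).mem_nhds ⟨x, hx, by simp⟩
  refine (gauge_pos (absorbent_nhds_zero hA0) ?_).2 hv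
  rw [NormedSpace.isVonNBounded_iff]
  have := hbdd.sub (Bornology.isBounded_singleton (x := x))
  rwa [Set.sub_singleton] at this

/-- The Hessian of `ψ⁻²` at `(0, 1)` for a function `ψ` given implicitly by
`h (z₀ + ψ (w, a) • w) = t + a * ψ (w, a)`, at a critical point `z₀` of `h`. -/
lemma hessian_inv_sq {W : Type*} [NormedAddCommGroup W] [NormedSpace ℝ W] {h : W → ℝ} {z₀ : W}
    (hh : ContDiffAt ℝ 2 h z₀) (hcrit : fderiv ℝ h z₀ = 0) {ψ : W × ℝ → ℝ} {s t : ℝ}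
    (hψ : ContDiffAt ℝ 2 ψ (0, 1)) (hs : ψ (0, 1) = s) (hs0 : 0 < s)
    (heq : ∀ᶠ v in 𝓝 ((0, 1) : W × ℝ), h (z₀ + ψ v • v.1) = t + v.2 * ψ v) (u u' : W × ℝ) :
    fderiv ℝ (fun v => fderiv ℝ (fun v' => ((ψ v')⁻¹) ^ 2) v u) (0, 1) u' =
      2 * (s⁻¹ ^ 2 * (u.2 * u'.2) - s⁻¹ * fderiv ℝ (fderiv ℝ h) z₀ u'.1 u.1) := by
  set e : W × ℝ := (0, 1) with he
  have he1 : e.1 = 0 := rfl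
  have he2 : e.2 = 1 := rfl
  have hbase : z₀ + ψ e • e.1 = z₀ := by simp [he]
  have hψc : ContinuousAt ψ e := hψ.continuousAt
  have hq : ContinuousAt (fun v : W × ℝ => z₀ + ψ v • v.1) e := by fun_prop
  have hψd : ∀ᶠ v in 𝓝 e, DifferentiableAt ℝ ψ v :=
    (hψ.eventually (by simp)).mono fun v hv => hv.differentiableAt (by simp)
  have hhd : ∀ᶠ v in 𝓝 e, DifferentiableAt ℝ h (z₀ + ψ v • v.1) := by
    have h1 : ∀ᶠ z in 𝓝 z₀, DifferentiableAt ℝ h z :=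
      (hh.eventually (by simp)).mono fun v hv => hv.differentiableAt (by simp)
    rw [ContinuousAt, hbase] at hq
    exact hq.eventually h1
  have hψ0 : ∀ᶠ v in 𝓝 e, ψ v ≠ 0 := hψc.eventually_ne (by rw [hs]; exact hs0.ne')
  have hψ2 : HasFDerivAt (fderiv ℝ ψ) (fderiv ℝ (fderiv ℝ ψ) e) e :=
    ((hψ.fderiv_right (m := 1) (by norm_num)).differentiableAt (by simp)).hasFDerivAt
  have hh2 : HasFDerivAt (fderiv ℝ h) (fderiv ℝ (fderiv ℝ h) z₀) (z₀ + ψ e • e.1) := by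
    rw [hbase]
    exact ((hh.fderiv_right (m := 1) (by norm_num)).differentiableAt (by simp)).hasFDerivAt
  have hqd : ∀ v, DifferentiableAt ℝ ψ v → HasFDerivAt (fun v : W × ℝ => z₀ + ψ v • v.1)
      (ψ v • ContinuousLinearMap.fst ℝ W ℝ + (fderiv ℝ ψ v).smulRight v.1) v := fun v hv =>
    (hv.hasFDerivAt.smul hasFDerivAt_fst).const_add z₀
  -- The derivative of the implicit equation, on a whole neighbourhood so that it can be
  -- differentiated once more.
  have hfirst : ∀ᶠ v in 𝓝 e, ∀ u : W × ℝ,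
      fderiv ℝ h (z₀ + ψ v • v.1) (ψ v • u.1 + fderiv ℝ ψ v u • v.1) =
        v.2 * fderiv ℝ ψ v u + ψ v * u.2 := by
    filter_upwards [heq.eventually_nhds, hψd, hhd] with v hv hd hd' u
    have h1 := hd'.hasFDerivAt.comp v (hqd v hd)
    have h2 := ((hasFDerivAt_snd (𝕜 := ℝ) (E := W) (F := ℝ) (p := v)).mul
      hd.hasFDerivAt).const_add t
    have h3 := (h1.congr_of_eventuallyEq (hv.mono fun y hy => hy.symm)).unique h2
    simpa using DFunLike.congr_fun h3 u
  have hD1 : ∀ u : W × ℝ, fderiv ℝ ψ e u = - (s * u.2) := by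
    intro u
    have := hfirst.self_of_nhds u
    rw [hbase, hcrit, hs] at this
    simp [he] at this
    linarith
  have hD2 : fderiv ℝ (fderiv ℝ ψ) e u' u =
      s ^ 2 * fderiv ℝ (fderiv ℝ h) z₀ u'.1 u.1 + 2 * s * (u.2 * u'.2) := by
    have hψu : HasFDerivAt (fun v => fderiv ℝ ψ v u) _ e := hψ2.clm_apply (hasFDerivAt_const u e)
    have hψe := hψd.self_of_nhds
    have hl := (hh2.comp e (hqd e hψe)).clm_apply
      ((hψe.hasFDerivAt.smul (hasFDerivAt_const u.1 e)).add
        (hψu.smul (hasFDerivAt_fst (𝕜 := ℝ) (E := W) (F := ℝ) (p := e))))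
    have hr := ((hasFDerivAt_snd (𝕜 := ℝ) (E := W) (F := ℝ) (p := e)).mul hψu).add
      (hψe.hasFDerivAt.mul (hasFDerivAt_const u.2 e))
    have h3 := (hl.congr_of_eventuallyEq (hfirst.mono fun y hy => (hy u).symm)).unique hr
    have h4 := DFunLike.congr_fun h3 u'
    simp [hD1, hcrit, hs, he1, he2] at h4
    linarith
  have hE : (fun v => fderiv ℝ (fun v' => ((ψ v')⁻¹) ^ 2) v u) =ᶠ[𝓝 e]
      fun v => -2 * ((ψ v)⁻¹ ^ 3 * fderiv ℝ ψ v u) := by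
    filter_upwards [hψd, hψ0] with v hd h0
    have := ((hasDerivAt_inv h0).comp_hasFDerivAt v hd.hasFDerivAt).pow 2
    refine (DFunLike.congr_fun this.fderiv u).trans ?_
    simp
    field_simp
  rw [hE.fderiv_eq]
  have hψu : HasFDerivAt (fun v => fderiv ℝ ψ v u) _ e := hψ2.clm_apply (hasFDerivAt_const u e)
  have h5 := (((((hasDerivAt_inv hψ0.self_of_nhds).comp_hasFDerivAt e
    hψd.self_of_nhds.hasFDerivAt).pow 3).mul hψu).const_mul (-2))
  refine (DFunLike.congr_fun h5.fderiv u').trans ?_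
  simp [hD1, hD2, hs]
  field_simp
  ring

lemma prod_scale {n : ℕ} (hn : 2 ≤ n) (r : ℝ) :
    ∏ i : Fin n, (if (i : ℕ) < n - 1 then r else r ^ 2) = r ^ (n + 1) := by
  obtain ⟨m, rfl⟩ : ∃ m, n = m + 1 := ⟨n - 1, by omega⟩
  rw [Fin.prod_univ_castSucc]
  simp
  ring

/-- Row scaling: rows `i < n - 1` carry only the `r`-term and the last row only the `r ^ 2`-term. -/
lemma det_hessian {n : ℕ} (hn : 2 ≤ n)
    (B : EuclideanSpace ℝ (Fin (n - 1)) →L[ℝ] EuclideanSpace ℝ (Fin (n - 1)) →L[ℝ] ℝ) (r : ℝ) :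
    (Matrix.of fun i j : Fin n => r ^ 2 * ((coordVec n j).2 * (coordVec n i).2) -
        r * B (coordVec n i).1 (coordVec n j).1).det =
      r ^ (n + 1) * (Matrix.of fun i j : Fin n => (coordVec n j).2 * (coordVec n i).2 -
        B (coordVec n i).1 (coordVec n j).1).det := by
  rw [← prod_scale hn, ← Matrix.det_mul_column]
  congr 1
  ext i j
  by_cases hi : (i : ℕ) < n - 1
  · simp [coordVec, hi]
  · simp [coordVec, hi]

/-- **key computation for the weighted Ricci curvature of the Funk metric.**
Along the vertical geodesic `t ↦ (z₀, t)` the weight function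
`Ψ(t) = (1/2) log det G(t)`, built from the velocity-Hessian `G(t)` of `F²/2` at
`((z₀,t), eₙ)`, satisfies `Ψ'(t) = (n+1)/(2(h(z₀) − t))`. -/
theorem funk_weight_derivative {n : ℕ} (hn : 2 ≤ n)
    (D : Set (EuclideanSpace ℝ (Fin (n - 1)) × ℝ)) (hne : D.Nonempty)
    (hbdd : Bornology.IsBounded D) (hconv : Convex ℝ D) (hopen : IsOpen D)
    (U : Set (EuclideanSpace ℝ (Fin (n - 1)))) (hU : IsOpen U)
    (h : EuclideanSpace ℝ (Fin (n - 1)) → ℝ) (hh : ContDiffOn ℝ 2 h U)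
    (hgraph : ∀ z ∈ U, ((z, h z) : EuclideanSpace ℝ (Fin (n - 1)) × ℝ) ∈ frontier D)
    (hbelow : ∀ z ∈ U, ∀ t : ℝ, ((z, t) : EuclideanSpace ℝ (Fin (n - 1)) × ℝ) ∈ D → t < h z)
    (F : (EuclideanSpace ℝ (Fin (n - 1)) × ℝ) → (EuclideanSpace ℝ (Fin (n - 1)) × ℝ) → ℝ)
    (hF : ∀ x v, F x v = gauge ((· - x) '' D) v)
    (z₀ : EuclideanSpace ℝ (Fin (n - 1))) (hz₀ : z₀ ∈ U)
    (hz₀D : ((z₀, (0 : ℝ)) : EuclideanSpace ℝ (Fin (n - 1)) × ℝ) ∈ D)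
    (hcrit : fderiv ℝ h z₀ = 0)
    (I : Set ℝ)
    (hI : I = {t : ℝ | ((z₀, t) : EuclideanSpace ℝ (Fin (n - 1)) × ℝ) ∈ D})
    (hsmooth : ∀ t ∈ I, ContDiffAt ℝ 3
      (fun p : (EuclideanSpace ℝ (Fin (n - 1)) × ℝ) × (EuclideanSpace ℝ (Fin (n - 1)) × ℝ) =>
        F p.1 p.2)
      ((z₀, t), ((0 : EuclideanSpace ℝ (Fin (n - 1))), (1 : ℝ))))
    (G : ℝ → Matrix (Fin n) (Fin n) ℝ)
    (hG : ∀ t : ℝ, ∀ i j : Fin n, G t i j =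
      (1 / 2) * fderiv ℝ
        (fun v => fderiv ℝ (fun v' => (F (z₀, t) v') ^ 2) v (coordVec n j))
        ((0 : EuclideanSpace ℝ (Fin (n - 1))), (1 : ℝ)) (coordVec n i))
    (hGpos : ∀ t ∈ I, (G t).PosDef)
    (Ψ : ℝ → ℝ) (hΨ : ∀ t : ℝ, Ψ t = (1 / 2) * Real.log (G t).det) :
    ∀ t ∈ I, HasDerivAt Ψ ((n + 1 : ℝ) / (2 * (h z₀ - t))) t := by
  have hhc : ContDiffAt ℝ 2 h z₀ := hh.contDiffAt (hU.mem_nhds hz₀)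
  set B := fderiv ℝ (fderiv ℝ h) z₀ with hB
  have hIopen : IsOpen I := by
    rw [hI]
    exact hopen.preimage (by fun_prop : Continuous fun t : ℝ => ((z₀, t) : EuclideanSpace ℝ (Fin (n - 1)) × ℝ))
  have hGdet : ∀ t ∈ I, 0 < h z₀ - t ∧ (G t).det = (h z₀ - t)⁻¹ ^ (n + 1) *
      (Matrix.of fun i j : Fin n => (coordVec n j).2 * (coordVec n i).2 -
        B (coordVec n i).1 (coordVec n j).1).det := by
    intro t ht
    have htD : ((z₀, t) : EuclideanSpace ℝ (Fin (n - 1)) × ℝ) ∈ D := by rw [hI] at ht; exact ht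
    have hpos : 0 < h z₀ - t := sub_pos.2 (hbelow z₀ hz₀ t htD)
    refine ⟨hpos, ?_⟩
    set φ : EuclideanSpace ℝ (Fin (n - 1)) × ℝ → ℝ := F (z₀, t) with hφ
    have hφc : ContDiffAt ℝ 2 φ (0, 1) := by
      have h1 : ContDiffAt ℝ 3 φ (0, 1) :=
        (hsmooth t ht).comp ((0, 1) : EuclideanSpace ℝ (Fin (n - 1)) × ℝ)
          (f := fun v : EuclideanSpace ℝ (Fin (n - 1)) × ℝ => (((z₀, t) : EuclideanSpace ℝ (Fin (n - 1)) × ℝ), v)) (by fun_prop)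
      exact h1.of_le (by norm_num)
    have hφ0 : 0 < φ (0, 1) := by
      rw [hφ, hF]
      exact gauge_translate_pos hbdd hopen htD (by simp)
    have hφpos : ∀ᶠ v in 𝓝 ((0, 1) : EuclideanSpace ℝ (Fin (n - 1)) × ℝ), 0 < φ v :=
      hφc.continuousAt.eventually (lt_mem_nhds hφ0)
    have hψc : ContDiffAt ℝ 2 (fun v => (φ v)⁻¹) (0, 1) := hφc.inv hφ0.ne'
    have hψ' := hψc.continuousAt
    have hq : Tendsto (fun v : EuclideanSpace ℝ (Fin (n - 1)) × ℝ => z₀ + (φ v)⁻¹ • v.1) (𝓝 (0, 1)) (𝓝 z₀) := by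
      have : ContinuousAt (fun v : EuclideanSpace ℝ (Fin (n - 1)) × ℝ => z₀ + (φ v)⁻¹ • v.1) (0, 1) := by fun_prop
      simpa [ContinuousAt] using this
    have hsnd : ∀ᶠ v : EuclideanSpace ℝ (Fin (n - 1)) × ℝ in 𝓝 (0, 1), 0 < v.2 :=
      continuous_snd.continuousAt.eventually (lt_mem_nhds (by simp))
    have hDnear : ∀ᶠ z in 𝓝 z₀, ((z, t) : EuclideanSpace ℝ (Fin (n - 1)) × ℝ) ∈ D :=
      (hopen.preimage (by fun_prop : Continuous fun z : EuclideanSpace ℝ (Fin (n - 1)) => ((z, t) : EuclideanSpace ℝ (Fin (n - 1)) × ℝ))).mem_nhds htD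
    have heq : ∀ᶠ v in 𝓝 ((0, 1) : EuclideanSpace ℝ (Fin (n - 1)) × ℝ),
        h (z₀ + (φ v)⁻¹ • v.1) = t + v.2 * (φ v)⁻¹ := by
      filter_upwards [hφpos, hsnd, hq.eventually hDnear, hq.eventually (hU.mem_nhds hz₀)]
        with v hv hv2 hvD hvU
      have hfr : (z₀, t) + (φ v)⁻¹ • v ∈ frontier D := by
        have := hv
        rw [hφ, hF] at this ⊢
        exact gauge_boundary hconv hopen htD this
      have hfr' : ((z₀ + (φ v)⁻¹ • v.1, t + v.2 * (φ v)⁻¹) : EuclideanSpace ℝ (Fin (n - 1)) × ℝ) ∈ frontier D := by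
        convert hfr using 1
        ext1 <;> simp [mul_comm]
      refine frontier_unique hconv hopen hvD (hgraph _ hvU) hfr' (hbelow _ hvU _ hvD) ?_
      have := mul_pos hv2 (inv_pos.2 hv)
      linarith
    have hs : (φ (0, 1))⁻¹ = h z₀ - t := by
      have := heq.self_of_nhds
      simp at this
      linarith
    rw [← det_hessian hn]
    congr 1
    ext i j
    have := hessian_inv_sq hhc hcrit hψc hs hpos heq (coordVec n j) (coordVec n i)
    simp only [inv_inv] at this
    rw [hG, this, Matrix.of_apply]
    ring
  intro t ht
  set M := (Matrix.of fun i j : Fin n => (coordVec n j).2 * (coordVec n i).2 -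
        B (coordVec n i).1 (coordVec n j).1).det with hM
  obtain ⟨hpos, hdet⟩ := hGdet t ht
  have hM0 : M ≠ 0 := by
    have := (hGpos t ht).det_pos
    rw [hdet] at this
    exact right_ne_zero_of_mul this.ne'
  have hev : Ψ =ᶠ[𝓝 t] fun τ => (1 / 2) * (-(n + 1) * Real.log (h z₀ - τ) + Real.log M) := by
    filter_upwards [hIopen.mem_nhds ht] with τ hτ
    obtain ⟨hp, hd⟩ := hGdet τ hτ
    rw [hΨ, hd, Real.log_mul (by positivity) hM0, Real.log_pow, Real.log_inv]
    push_cast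
    ring
  refine HasDerivAt.congr_of_eventuallyEq ?_ hev
  have h1 := (((((hasDerivAt_id t).const_sub (h z₀)).log hpos.ne').const_mul
    (-(n + 1 : ℝ))).add_const (Real.log M)).const_mul (1 / 2)
  refine h1.congr_deriv ?_
  have := hpos.ne'
  simp only [id]
  field_simp
end

section
/- (Hessian of the Hilbert metric in graph coordinates.) Let n ≥ 2, write ℝⁿ = ℝ^{n−1} × ℝ, and let D ⊆ ℝⁿ be a nonempty bounded convex open set. Let U ⊆ ℝ^{n−1} be open and h, b : U → ℝ be twice continuously differentiable such that for every z ∈ U the points (z, h(z)) and (z, b(z)) lie in the frontier of D, and b(z) < t < h(z) whenever (z,t) ∈ D. Define F_H(x,v) := (gauge (D − x) v + gauge (D − x) (−v))/2, φ(z,t) := h(z) − t and ψ(z,t) := t − b(z). Fix (z₀,t₀) ∈ D with z₀ ∈ U, let eₙ := (0,1), and assume F_H is twice continuously differentiable on a neighborhood of ((z₀,t₀), eₙ) in ℝⁿ × ℝⁿ. Then for all coordinate indices i, j ∈ {1,…,n}: 2·∂²(F_H²)/∂vⁱ∂vʲ((z₀,t₀), eₙ) = −(∂ᵢ∂ⱼφ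 + ∂ᵢ∂ⱼψ)·(1/φ + 1/ψ) + (∂ᵢφ/φ − ∂ᵢψ/ψ)·(∂ⱼφ/φ − ∂ⱼψ/ψ), with all functions evaluated at (z₀,t₀) and ∂ᵢ the partial derivative in the i-th coordinate of ℝⁿ. -/
open Filter Topology

/-- A vertical ray issuing from a point of an open convex set meets the frontier at most once. -/
theorem frontier_vertical_unique {Z : Type*} [NormedAddCommGroup Z] [NormedSpace ℝ Z]
    {S : Set (Z × ℝ)} (hconv : Convex ℝ S) (hopen : IsOpen S) {y : Z} {s t : ℝ}
    (hy : (y, (0 : ℝ)) ∈ S) (hs : 0 < s) (ht : 0 < t)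
    (hsf : (y, s) ∈ frontier S) (htf : (y, t) ∈ frontier S) : s = t := by
  have key : ∀ {a b : ℝ}, 0 < a → a < b → (y, a) ∈ frontier S → (y, b) ∈ frontier S → False := by
    intro a b ha hab haf hbf
    refine haf.2 (hconv.openSegment_interior_closure_subset_interior
      (by rwa [hopen.interior_eq]) hbf.1 ?_)
    have hb : 0 < b := ha.trans hab
    refine ⟨1 - a / b, a / b, ?_, by positivity, by ring, ?_⟩
    · rw [sub_pos, div_lt_one hb]; exact hab
    · ext
      · simp [← add_smul]
      · simp [hb.ne']
  rcases lt_trichotomy s t with hst | hst | hst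
  · exact (key hs hst hsf htf).elim
  · exact hst
  · exact (key ht hst htf hsf).elim

/-- If the frontier of `S` near the vertical axis is the graph of `k`, then `g = gauge S` satisfies
`g (w, s) * k (w / g (w, s)) = s` near `(0, 1)`: both `(w, s) / g (w, s)` and the graph point over
`w / g (w, s)` lie on the frontier, on the same vertical ray. -/
theorem gauge_graph_equation {Z : Type*} [NormedAddCommGroup Z] [NormedSpace ℝ Z]
    {S : Set (Z × ℝ)} (hconv : Convex ℝ S) (hopen : IsOpen S) (h0 : (0 : Z × ℝ) ∈ S)
    {k : Z → ℝ} (hk : ∀ᶠ w in 𝓝 (0 : Z), 0 < k w ∧ (w, k w) ∈ frontier S) :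
    gauge S (0, 1) = (k 0)⁻¹ ∧
    ∀ᶠ v in 𝓝 ((0 : Z), (1 : ℝ)), gauge S v * k ((gauge S v)⁻¹ • v.1) = v.2 := by
  have hS0 : S ∈ 𝓝 (0 : Z × ℝ) := hopen.mem_nhds h0
  have hcont : Continuous (gauge S) := continuous_gauge hconv hS0
  obtain ⟨hk0, hkf⟩ := hk.self_of_nhds
  have hge : gauge S (0, 1) = (k 0)⁻¹ := by
    have h1 := (gauge_eq_one_iff_mem_frontier hconv hS0).2 hkf
    have h2 : ((0 : Z), k 0) = k 0 • ((0 : Z), (1 : ℝ)) := by ext <;> simp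
    rw [h2, gauge_smul_of_nonneg hk0.le, smul_eq_mul] at h1
    exact eq_inv_of_mul_eq_one_right h1
  refine ⟨hge, ?_⟩
  have hgpos : 0 < gauge S ((0 : Z), (1 : ℝ)) := by rw [hge]; positivity
  have hY : Tendsto (fun v : Z × ℝ => (gauge S v)⁻¹ • v.1) (𝓝 (0, 1)) (𝓝 0) := by
    have : ContinuousAt (fun v : Z × ℝ => (gauge S v)⁻¹ • v.1) (0, 1) :=
      (hcont.continuousAt.inv₀ hgpos.ne').smul continuousAt_fst
    simpa [ContinuousAt] using this
  have hS : ∀ᶠ w in 𝓝 (0 : Z), (w, (0 : ℝ)) ∈ S :=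
    (by fun_prop : Continuous fun w : Z => (w, (0 : ℝ))).continuousAt.eventually_mem hS0
  filter_upwards [hY.eventually hk, hY.eventually hS,
    hcont.continuousAt.eventually (lt_mem_nhds hgpos),
    continuousAt_snd.eventually (lt_mem_nhds (show (0 : ℝ) < ((0 : Z), (1 : ℝ)).2 by simp))]
    with v hkv hSv hgv hv2
  have hfr : ((gauge S v)⁻¹ • v.1, (gauge S v)⁻¹ * v.2) ∈ frontier S := by
    rw [← gauge_eq_one_iff_mem_frontier hconv hS0]
    have : ((gauge S v)⁻¹ • v.1, (gauge S v)⁻¹ * v.2) = (gauge S v)⁻¹ • v := rfl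
    rw [this, gauge_smul_of_nonneg (by positivity), smul_eq_mul, inv_mul_cancel₀ hgv.ne']
  rw [frontier_vertical_unique hconv hopen hSv hkv.1 (by positivity) hkv.2 hfr,
    mul_inv_cancel_left₀ hgv.ne']

/-- A continuous solution `g` of the graph equation is `C²`. Indeed `(w, s) ↦ (w, g (w, s))` is a
right inverse of the explicit map `T (w, p) = (w, p * k (w / p))`, whose derivative at
`(0, 1 / k 0)` is the triangular isomorphism `(u, q) ↦ (u, k 0 * q + dk u)`, so near `(0, 1)` it
coincides with the local inverse of `T`. -/
theorem contDiffAt_of_graph_equation {Z : Type*} [NormedAddCommGroup Z] [NormedSpace ℝ Z]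
    [CompleteSpace Z] {k : Z → ℝ} (hk : ContDiffAt ℝ 2 k 0) (hk0 : 0 < k 0)
    {g : Z × ℝ → ℝ} (hg : ContinuousAt g (0, 1)) (hg1 : g (0, 1) = (k 0)⁻¹)
    (heq : ∀ᶠ v in 𝓝 ((0 : Z), (1 : ℝ)), g v * k ((g v)⁻¹ • v.1) = v.2) :
    ContDiffAt ℝ 2 g (0, 1) := by
  set a : Z × ℝ := (0, (k 0)⁻¹) with ha
  have hk0i : (k 0)⁻¹ ≠ 0 := by positivity
  let T : Z × ℝ → Z × ℝ := fun q => (q.1, q.2 * k (q.2⁻¹ • q.1))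
  let T' : (Z × ℝ) ≃L[ℝ] (Z × ℝ) :=
    (ContinuousLinearEquiv.refl ℝ Z).skewProd
      (ContinuousLinearEquiv.unitsEquivAut ℝ (Units.mk0 (k 0) hk0.ne')) (fderiv ℝ k 0)
  have hk' : ContDiffAt ℝ 2 k (a.2⁻¹ • a.1) := by simpa [ha] using hk
  have hT : ContDiffAt ℝ 2 T a := by
    refine contDiffAt_fst.prodMk (contDiffAt_snd.mul (ContDiffAt.comp a hk' ?_))
    exact (contDiffAt_snd.inv hk0i).smul contDiffAt_fst
  have hTa : T a = (0, 1) := by simp [T, ha, hk0.ne']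
  have hTd : HasFDerivAt T (T' : (Z × ℝ) →L[ℝ] (Z × ℝ)) a := by
    have hkd : HasFDerivAt k (fderiv ℝ k 0) (a.2⁻¹ • a.1) := by
      simpa [ha] using (hk.differentiableAt (by norm_num)).hasFDerivAt
    have hid : HasFDerivAt (fun q : Z × ℝ => q.2⁻¹ • q.1) _ a :=
      ((hasDerivAt_inv hk0i).comp_hasFDerivAt a
        (hasFDerivAt_snd (𝕜 := ℝ) (p := a))).smul (hasFDerivAt_fst (𝕜 := ℝ) (p := a))
    have h2 := (hasFDerivAt_fst (𝕜 := ℝ) (p := a)).prodMk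
      ((hasFDerivAt_snd (𝕜 := ℝ) (p := a)).mul (hkd.comp a hid))
    refine h2.congr_fderiv ?_
    ext u
    · simp [T']
    · simp [T', ha, hk0.ne']
    · simp [T']
    · simp [T', ha, hk0.ne']
  have hloc := hT.to_localInverse hTd (by norm_num)
  have hstr := hT.hasStrictFDerivAt' hTd (by norm_num)
  have hleft := hstr.eventually_left_inverse
  have htend : Tendsto (fun v : Z × ℝ => (v.1, g v)) (𝓝 (0, 1)) (𝓝 a) := by
    have : ContinuousAt (fun v : Z × ℝ => (v.1, g v)) (0, 1) := continuousAt_fst.prodMk hg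
    simpa [ContinuousAt, hg1, ha] using this
  rw [hTa] at hloc
  refine (contDiffAt_snd.comp _ hloc).congr_of_eventuallyEq ?_
  filter_upwards [heq, htend.eventually hleft] with v hv hl
  have : T (v.1, g v) = v := by ext <;> simp [T, hv]
  rw [this] at hl
  exact (congrArg Prod.snd hl).symm

/-- First and second derivatives at `(0, 1)` of a solution `g` of the graph equation. With
`y = w / g (w, s)`, differentiating the equation once gives
`dg (u, r) = (r - dk_y u) / κ y`, where `κ y = k y - dk_y y`. The denominator `κ` is critical at
`y = 0`, so only the numerator contributes to the second derivative. -/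
theorem fderiv_of_graph_equation {Z : Type*} [NormedAddCommGroup Z] [NormedSpace ℝ Z]
    {k : Z → ℝ} (hk : ContDiffAt ℝ 2 k 0) (hk0 : 0 < k 0)
    {g : Z × ℝ → ℝ} (hg : ContDiffAt ℝ 2 g (0, 1)) (hg1 : g (0, 1) = (k 0)⁻¹)
    (heq : ∀ᶠ v in 𝓝 ((0 : Z), (1 : ℝ)), g v * k ((g v)⁻¹ • v.1) = v.2) :
    (∀ u, fderiv ℝ g (0, 1) u = (u.2 - fderiv ℝ k 0 u.1) / k 0) ∧
    ∀ u u', fderiv ℝ (fun v => fderiv ℝ g v u) (0, 1) u'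
      = - fderiv ℝ (fderiv ℝ k) 0 u'.1 u.1 := by
  have hgne : g (0, 1) ≠ 0 := by rw [hg1]; positivity
  let Y : Z × ℝ → Z := fun v => (g v)⁻¹ • v.1
  have hYc : ContDiffAt ℝ 2 Y (0, 1) := (hg.inv hgne).smul contDiffAt_fst
  have hY0 : Y (0, 1) = 0 := by simp [Y]
  have hYt : Tendsto Y (𝓝 (0, 1)) (𝓝 0) := by
    simpa [ContinuousAt, hY0] using hYc.continuousAt
  have hkd : DifferentiableAt ℝ k 0 := hk.differentiableAt (by norm_num)
  have hkdd : DifferentiableAt ℝ (fderiv ℝ k) 0 :=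
    (hk.fderiv_right (m := 1) (by norm_num)).differentiableAt (by norm_num)
  have hkev : ∀ᶠ y in 𝓝 (0 : Z), DifferentiableAt ℝ k y :=
    (hk.eventually (by simp)).mono fun y hy => hy.differentiableAt (by norm_num)
  have hgev : ∀ᶠ v in 𝓝 ((0 : Z), (1 : ℝ)), DifferentiableAt ℝ g v :=
    (hg.eventually (by simp)).mono fun y hy => hy.differentiableAt (by norm_num)
  -- The height at which the tangent plane of the graph at `y` meets the vertical axis.
  let κ : Z → ℝ := fun y => k y - fderiv ℝ k y y
  have hκd : HasFDerivAt κ (0 : Z →L[ℝ] ℝ) 0 := by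
    refine (hkd.hasFDerivAt.sub (hkdd.hasFDerivAt.clm_apply (hasFDerivAt_id 0))).congr_fderiv ?_
    ext u
    simp
  have hκ0 : κ 0 = k 0 := by simp [κ]
  have hform : ∀ᶠ v in 𝓝 ((0 : Z), (1 : ℝ)), ∀ u,
      fderiv ℝ g v u = (u.2 - fderiv ℝ k (Y v) u.1) / κ (Y v) := by
    have hκev : ∀ᶠ y in 𝓝 (0 : Z), κ y ≠ 0 :=
      hκd.continuousAt.eventually_ne (by rw [hκ0]; exact hk0.ne')
    filter_upwards [heq.eventually_nhds, hgev, hYt.eventually hkev, hYt.eventually hκev,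
      hg.continuousAt.eventually_ne hgne] with v hv hgv hkv hκv hgnev u
    have hYd : HasFDerivAt Y _ v :=
      ((hasDerivAt_inv hgnev).comp_hasFDerivAt v hgv.hasFDerivAt).smul hasFDerivAt_fst
    have h1 : HasFDerivAt (fun v => g v * k (Y v)) _ v :=
      hgv.hasFDerivAt.mul (hkv.hasFDerivAt.comp v hYd)
    have h2 : HasFDerivAt (fun v => g v * k (Y v)) (ContinuousLinearMap.snd ℝ Z ℝ) v :=
      hasFDerivAt_snd.congr_of_eventuallyEq hv
    have h3 := DFunLike.congr_fun (h1.unique h2) u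
    rw [eq_div_iff hκv]
    simp only [add_apply, smul_apply,
      ContinuousLinearMap.comp_apply, ContinuousLinearMap.coe_snd', ContinuousLinearMap.coe_fst',
      ContinuousLinearMap.smulRight_apply, map_add, map_smul, smul_eq_mul, Function.comp] at h3
    simp only [κ, Y, map_smul, smul_eq_mul] at h3 ⊢
    field_simp at h3 ⊢
    linear_combination h3
  refine ⟨fun u => by rw [hform.self_of_nhds u, hY0, hκ0], fun u u' => ?_⟩
  have hYd : HasFDerivAt Y (k 0 • ContinuousLinearMap.fst ℝ Z ℝ) (0, 1) := by
    have hgd := (hg.differentiableAt (by norm_num)).hasFDerivAt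
    refine (((hasDerivAt_inv hgne).comp_hasFDerivAt _ hgd).smul hasFDerivAt_fst).congr_fderiv ?_
    ext u <;> simp [hg1]
  have hM : HasFDerivAt (fun y => (u.2 - fderiv ℝ k y u.1) / κ y)
      (-(k 0)⁻¹ • (fderiv ℝ (fderiv ℝ k) 0).flip u.1) (Y (0, 1)) := by
    rw [hY0]
    have hnum : HasFDerivAt (fun y => u.2 - fderiv ℝ k y u.1) _ 0 :=
      (hkdd.hasFDerivAt.clm_apply (hasFDerivAt_const u.1 0)).const_sub u.2
    refine (hnum.mul ((hasDerivAt_inv (by rw [hκ0]; exact hk0.ne')).comp_hasFDerivAt 0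
      hκd)).congr_fderiv ?_
    ext w
    simp [hκ0]
  have hE : (fun v => fderiv ℝ g v u) =ᶠ[𝓝 (0, 1)]
      (fun y => (u.2 - fderiv ℝ k y u.1) / κ y) ∘ Y := hform.mono fun v hv => hv u
  rw [hE.fderiv_eq, (hM.comp _ hYd).fderiv]
  simp [hk0.ne']

/-- First and second derivatives of `(z, t) ↦ h z - t`. -/
theorem fderiv_fderiv_height {Z : Type*} [NormedAddCommGroup Z] [NormedSpace ℝ Z]
    {h : Z → ℝ} {z₀ : Z} (hh : ContDiffAt ℝ 2 h z₀) (t₀ : ℝ) :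
    (∀ u, fderiv ℝ (fun p : Z × ℝ => h p.1 - p.2) (z₀, t₀) u = fderiv ℝ h z₀ u.1 - u.2) ∧
    ∀ u u', fderiv ℝ (fun p => fderiv ℝ (fun p : Z × ℝ => h p.1 - p.2) p u) (z₀, t₀) u'
      = fderiv ℝ (fderiv ℝ h) z₀ u'.1 u.1 := by
  have hdd : DifferentiableAt ℝ (fderiv ℝ h) z₀ :=
    (hh.fderiv_right (m := 1) (by norm_num)).differentiableAt (by norm_num)
  have hev : ∀ᶠ z in 𝓝 z₀, DifferentiableAt ℝ h z :=
    (hh.eventually (by simp)).mono fun y hy => hy.differentiableAt (by norm_num)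
  have hform : ∀ᶠ p in 𝓝 (z₀, t₀), ∀ u,
      fderiv ℝ (fun p : Z × ℝ => h p.1 - p.2) p u = fderiv ℝ h p.1 u.1 - u.2 := by
    filter_upwards [continuousAt_fst.eventually hev] with p hp u
    have h1 : HasFDerivAt (fun p : Z × ℝ => h p.1 - p.2) _ p :=
      (hp.hasFDerivAt.comp p (hasFDerivAt_fst (𝕜 := ℝ) (p := p))).sub
        (hasFDerivAt_snd (𝕜 := ℝ) (p := p))
    rw [h1.fderiv]
    rfl
  refine ⟨hform.self_of_nhds, fun u u' => ?_⟩
  have hE : (fun p => fderiv ℝ (fun p : Z × ℝ => h p.1 - p.2) p u) =ᶠ[𝓝 (z₀, t₀)]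
      fun p => fderiv ℝ h p.1 u.1 - u.2 := hform.mono fun p hp => hp u
  have hd : HasFDerivAt (fderiv ℝ h) (fderiv ℝ (fderiv ℝ h) z₀) (z₀, t₀).1 := hdd.hasFDerivAt
  have h1 : HasFDerivAt (fun p : Z × ℝ => fderiv ℝ h p.1 u.1 - u.2) _ (z₀, t₀) :=
    ((hd.comp (z₀, t₀) (hasFDerivAt_fst (𝕜 := ℝ))).clm_apply
      (hasFDerivAt_const u.1 (z₀, t₀))).sub_const u.2
  rw [hE.fderiv_eq, h1.fderiv]
  simp

/-- The Hessian of the square of the mean of two `C²` functions. -/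
theorem fderiv_fderiv_half_sum_sq {E : Type*} [NormedAddCommGroup E] [NormedSpace ℝ E]
    {p q : E → ℝ} {e : E} (hp : ContDiffAt ℝ 2 p e) (hq : ContDiffAt ℝ 2 q e) (u u' : E) :
    2 * fderiv ℝ (fun v => fderiv ℝ (fun v' => ((p v' + q v') / 2) ^ 2) v u) e u'
      = (fderiv ℝ p e u' + fderiv ℝ q e u') * (fderiv ℝ p e u + fderiv ℝ q e u)
        + (p e + q e) * (fderiv ℝ (fun v => fderiv ℝ p v u) e u'
          + fderiv ℝ (fun v => fderiv ℝ q v u) e u') := by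
  have hpe : ∀ᶠ v in 𝓝 e, DifferentiableAt ℝ p v :=
    (hp.eventually (by simp)).mono fun y hy => hy.differentiableAt (by norm_num)
  have hqe : ∀ᶠ v in 𝓝 e, DifferentiableAt ℝ q v :=
    (hq.eventually (by simp)).mono fun y hy => hy.differentiableAt (by norm_num)
  have hE : (fun v => fderiv ℝ (fun v' => ((p v' + q v') / 2) ^ 2) v u) =ᶠ[𝓝 e]
      fun v => 2⁻¹ * ((p v + q v) * (fderiv ℝ p v u + fderiv ℝ q v u)) := by
    filter_upwards [hpe, hqe] with v hpv hqv
    have h1 := ((hpv.hasFDerivAt.add hqv.hasFDerivAt).mul_const (2⁻¹ : ℝ)).pow 2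
    have h2 : HasFDerivAt (fun v' => ((p v' + q v') / 2) ^ 2) _ v := h1
    rw [h2.fderiv]
    simp
    ring
  have hpd : DifferentiableAt ℝ (fun v => fderiv ℝ p v u) e :=
    ((hp.fderiv_right (m := 1) (by norm_num)).differentiableAt (by norm_num)).clm_apply
      (differentiableAt_const u)
  have hqd : DifferentiableAt ℝ (fun v => fderiv ℝ q v u) e :=
    ((hq.fderiv_right (m := 1) (by norm_num)).differentiableAt (by norm_num)).clm_apply
      (differentiableAt_const u)
  have h1 := (((hpe.self_of_nhds.hasFDerivAt.add hqe.self_of_nhds.hasFDerivAt).mul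
    (hpd.hasFDerivAt.add hqd.hasFDerivAt)).const_mul (2⁻¹ : ℝ))
  have h2 : HasFDerivAt
    (fun v => 2⁻¹ * ((p v + q v) * (fderiv ℝ p v u + fderiv ℝ q v u))) _ e := h1
  rw [hE.fderiv_eq, h2.fderiv]
  simp
  ring

theorem shifted_frontier {E : Type*} [NormedAddCommGroup E] [NormedSpace ℝ E] {D : Set E}
    {x p : E} (hp : p ∈ frontier D) : p - x ∈ frontier ((· - x) '' D) := by
  have := (Homeomorph.subRight x).image_frontier D
  exact this ▸ ⟨p, hp, rfl⟩

theorem fderiv_comp_reflect {E F : Type*} [NormedAddCommGroup E] [NormedSpace ℝ E]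
    [NormedAddCommGroup F] [NormedSpace ℝ F] (f : E → F) (a x : E) :
    fderiv ℝ (fun y => f (a - y)) x = -fderiv ℝ f (a - x) := by
  have h1 := (ContinuousLinearEquiv.neg ℝ (M := E)).comp_right_fderiv
    (f := fun y => f (a + y)) (x := x)
  have h2 : (fun y => f (a + y)) ∘ (ContinuousLinearEquiv.neg ℝ (M := E))
      = fun y => f (a - y) := by
    funext y
    simp [sub_eq_add_neg]
  rw [h2, fderiv_comp_add_left] at h1
  rw [h1]
  ext u
  simp [sub_eq_add_neg]

/-- **Hessian of the Hilbert metric in graph coordinates.**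
With the upper and lower parts of `∂D` given as the graphs of `h` and `b`,
`φ(z,t) = h(z) − t`, `ψ(z,t) = t − b(z)`, the velocity-Hessian of `F_H²` at
`((z₀,t₀), eₙ)` satisfies
`2 ∂²(F_H²)/∂vⁱ∂vʲ = −(∂ᵢ∂ⱼφ + ∂ᵢ∂ⱼψ)(1/φ + 1/ψ) + (∂ᵢφ/φ − ∂ᵢψ/ψ)(∂ⱼφ/φ − ∂ⱼψ/ψ)`. -/
theorem hilbert_hessian_graph_coords {n : ℕ} (hn : 2 ≤ n)
    (D : Set (EuclideanSpace ℝ (Fin (n - 1)) × ℝ)) (hne : D.Nonempty)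
    (hbdd : Bornology.IsBounded D) (hconv : Convex ℝ D) (hopen : IsOpen D)
    (U : Set (EuclideanSpace ℝ (Fin (n - 1)))) (hU : IsOpen U)
    (h b : EuclideanSpace ℝ (Fin (n - 1)) → ℝ)
    (hh : ContDiffOn ℝ 2 h U) (hb : ContDiffOn ℝ 2 b U)
    (hgraphTop : ∀ z ∈ U, ((z, h z) : EuclideanSpace ℝ (Fin (n - 1)) × ℝ) ∈ frontier D)
    (hgraphBot : ∀ z ∈ U, ((z, b z) : EuclideanSpace ℝ (Fin (n - 1)) × ℝ) ∈ frontier D)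
    (hbetween : ∀ z ∈ U, ∀ t : ℝ,
      ((z, t) : EuclideanSpace ℝ (Fin (n - 1)) × ℝ) ∈ D → b z < t ∧ t < h z)
    (FH : (EuclideanSpace ℝ (Fin (n - 1)) × ℝ) → (EuclideanSpace ℝ (Fin (n - 1)) × ℝ) → ℝ)
    (hFH : ∀ x v, FH x v = (gauge ((· - x) '' D) v + gauge ((· - x) '' D) (-v)) / 2)
    (φ ψ : (EuclideanSpace ℝ (Fin (n - 1)) × ℝ) → ℝ)
    (hφ : ∀ p, φ p = h p.1 - p.2) (hψ : ∀ p, ψ p = p.2 - b p.1)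
    (z₀ : EuclideanSpace ℝ (Fin (n - 1))) (t₀ : ℝ) (hz₀ : z₀ ∈ U)
    (hx₀ : ((z₀, t₀) : EuclideanSpace ℝ (Fin (n - 1)) × ℝ) ∈ D)
    (hsmooth : ContDiffAt ℝ 2
      (fun p : (EuclideanSpace ℝ (Fin (n - 1)) × ℝ) × (EuclideanSpace ℝ (Fin (n - 1)) × ℝ) =>
        FH p.1 p.2)
      ((z₀, t₀), ((0 : EuclideanSpace ℝ (Fin (n - 1))), (1 : ℝ)))) :
    ∀ i j : Fin n,
      2 * fderiv ℝ
          (fun v => fderiv ℝ (fun v' => (FH (z₀, t₀) v') ^ 2) v (coordVec n j))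
          ((0 : EuclideanSpace ℝ (Fin (n - 1))), (1 : ℝ)) (coordVec n i)
        = -((fderiv ℝ (fun p => fderiv ℝ φ p (coordVec n j)) (z₀, t₀) (coordVec n i))
              + (fderiv ℝ (fun p => fderiv ℝ ψ p (coordVec n j)) (z₀, t₀) (coordVec n i)))
            * (1 / φ (z₀, t₀) + 1 / ψ (z₀, t₀))
          + ((fderiv ℝ φ (z₀, t₀) (coordVec n i)) / φ (z₀, t₀)
              - (fderiv ℝ ψ (z₀, t₀) (coordVec n i)) / ψ (z₀, t₀))
            * ((fderiv ℝ φ (z₀, t₀) (coordVec n j)) / φ (z₀, t₀)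
              - (fderiv ℝ ψ (z₀, t₀) (coordVec n j)) / ψ (z₀, t₀)) := by
  intro i j
  set S := ((· - (z₀, t₀)) '' D) with hS
  have hSconv : Convex ℝ S := by
    simpa only [hS, sub_eq_add_neg, Set.image_add_right] using hconv.translate_preimage_left _
  have hSopen : IsOpen S := (Homeomorph.subRight (z₀, t₀)).isOpenMap D hopen
  have h0S : (0 : EuclideanSpace ℝ (Fin (n - 1)) × ℝ) ∈ S := ⟨(z₀, t₀), hx₀, sub_self _⟩
  have hhz : ContDiffAt ℝ 2 h z₀ := hh.contDiffAt (hU.mem_nhds hz₀)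
  have hbz : ContDiffAt ℝ 2 b z₀ := hb.contDiffAt (hU.mem_nhds hz₀)
  have hnear : ∀ᶠ z in 𝓝 z₀, z ∈ U ∧ (z, t₀) ∈ D :=
    (hU.eventually_mem hz₀).and
      ((by fun_prop : Continuous fun z : EuclideanSpace ℝ (Fin (n - 1)) =>
        (z, t₀)).continuousAt.eventually_mem (hopen.mem_nhds hx₀))
  obtain ⟨hbt, hth⟩ := hbetween z₀ hz₀ t₀ hx₀
  -- `kT` is the graph of the upper part of `∂D` seen from `(z₀, t₀)`; `kB` is that of the lower
  -- part after the point reflection in `(z₀, t₀)`, which turns `gauge S (-v)` into `gauge (-S) v`.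
  let kT : EuclideanSpace ℝ (Fin (n - 1)) → ℝ := fun w => h (z₀ + w) - t₀
  let kB : EuclideanSpace ℝ (Fin (n - 1)) → ℝ := fun w => t₀ - b (z₀ - w)
  have hkT : ∀ᶠ w in 𝓝 0, 0 < kT w ∧ (w, kT w) ∈ frontier S := by
    have ht : Tendsto (fun w => z₀ + w) (𝓝 0) (𝓝 z₀) := by
      simpa using (continuous_const_add z₀).tendsto 0
    filter_upwards [ht.eventually hnear] with w hw
    refine ⟨sub_pos.2 (hbetween _ hw.1 _ hw.2).2, ?_⟩
    simpa [kT] using shifted_frontier (x := (z₀, t₀)) (hgraphTop _ hw.1)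
  have hkB : ∀ᶠ w in 𝓝 0, 0 < kB w ∧ (w, kB w) ∈ frontier (-S) := by
    have ht : Tendsto (fun w => z₀ - w) (𝓝 0) (𝓝 z₀) := by
      have hc : Continuous fun w => z₀ - w := by fun_prop
      simpa using hc.tendsto 0
    filter_upwards [ht.eventually hnear] with w hw
    refine ⟨sub_pos.2 (hbetween _ hw.1 _ hw.2).1, ?_⟩
    have hf := shifted_frontier (x := (z₀, t₀)) (hgraphBot _ hw.1)
    have hneg : frontier (-S) = -frontier S :=
      ((Homeomorph.neg (EuclideanSpace ℝ (Fin (n - 1)) × ℝ)).preimage_frontier S).symm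
    rw [hneg, Set.mem_neg]
    simpa [kB] using hf
  have hkTc : ContDiffAt ℝ 2 kT 0 := by
    refine (ContDiffAt.comp (f := fun w => z₀ + w) 0 (by simpa using hhz) ?_).sub contDiffAt_const
    fun_prop
  have hkBc : ContDiffAt ℝ 2 kB 0 := by
    refine contDiffAt_const.sub (ContDiffAt.comp (f := fun w => z₀ - w) 0 (by simpa using hbz) ?_)
    fun_prop
  have hnS0 : (0 : EuclideanSpace ℝ (Fin (n - 1)) × ℝ) ∈ -S := by simpa using h0S
  obtain ⟨hpe, hpeq⟩ := gauge_graph_equation hSconv hSopen h0S hkT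
  obtain ⟨hqe, hqeq⟩ := gauge_graph_equation hSconv.neg hSopen.neg hnS0 hkB
  have hpc := contDiffAt_of_graph_equation hkTc hkT.self_of_nhds.1
    (continuousAt_gauge hSconv (hSopen.mem_nhds h0S)) hpe hpeq
  have hqc := contDiffAt_of_graph_equation hkBc hkB.self_of_nhds.1
    (continuousAt_gauge hSconv.neg (hSopen.neg.mem_nhds hnS0)) hqe hqeq
  obtain ⟨hp1, hp2⟩ := fderiv_of_graph_equation hkTc hkT.self_of_nhds.1 hpc hpe hpeq
  obtain ⟨hq1, hq2⟩ := fderiv_of_graph_equation hkBc hkB.self_of_nhds.1 hqc hqe hqeq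
  have hkT1 : fderiv ℝ kT = fun w => fderiv ℝ h (z₀ + w) := by
    funext w
    simp only [kT, fderiv_sub_const, fderiv_comp_add_left]
  have hkB1 : fderiv ℝ kB = fun w => fderiv ℝ b (z₀ - w) := by
    funext w
    simp only [kB, fderiv_const_sub, fderiv_comp_reflect, neg_neg]
  have hkT2 : fderiv ℝ (fderiv ℝ kT) 0 = fderiv ℝ (fderiv ℝ h) z₀ := by
    rw [hkT1, fderiv_comp_add_left, add_zero]
  have hkB2 : fderiv ℝ (fderiv ℝ kB) 0 = -fderiv ℝ (fderiv ℝ b) z₀ := by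
    rw [hkB1, fderiv_comp_reflect, sub_zero]
  have hF : (fun v => FH (z₀, t₀) v ^ 2) = fun v => ((gauge S v + gauge (-S) v) / 2) ^ 2 := by
    funext v
    rw [hFH, gauge_neg_set_eq_gauge_neg]
  have hφf : φ = fun p => h p.1 - p.2 := funext hφ
  have hψf : ψ = fun p => -(b p.1 - p.2) := by
    funext p
    rw [hψ, neg_sub]
  obtain ⟨hφ1, hφ2⟩ := fderiv_fderiv_height hhz t₀
  obtain ⟨hb1, hb2⟩ := fderiv_fderiv_height hbz t₀
  have hψ1 : ∀ p u, fderiv ℝ ψ p u = -fderiv ℝ (fun p => b p.1 - p.2) p u := by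
    intro p u
    rw [hψf, fderiv_fun_neg]
    rfl
  have hφ0 : φ (z₀, t₀) = kT 0 := by simp [hφ, kT]
  have hψ0 : ψ (z₀, t₀) = kB 0 := by simp [hψ, kB]
  have hkT0 : kT 0 ≠ 0 := hkT.self_of_nhds.1.ne'
  have hkB0 : kB 0 ≠ 0 := hkB.self_of_nhds.1.ne'
  rw [hF, fderiv_fderiv_half_sum_sq hpc hqc, hφ0, hψ0]
  simp only [hψ1, fderiv_fun_neg, neg_apply]
  simp only [hφf, hφ1, hφ2, hb1, hb2, hp1, hp2, hq1, hq2, hpe, hqe, hkT2, hkB2, neg_apply]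
  rw [hkT1, hkB1]
  simp only [add_zero, sub_zero]
  field_simp
  ring
end
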